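/- arXiv:1402.2589 — 4 statements merged into one kernel-verified Lean document; each statement's English description precedes it below -/
import Mathlib

section
/- Let G = (V, E) be a connected graph on n vertices with an ordering σ: V → {1, …, n} such that (i) for every vertex v, both the set of its closed left neighbors N_l[v] = {u ∈ N[v] : σ(u) ≤ σ(v)} and the set of its closed right neighbors N_r[v] = {u ∈ N[v] : σ(u) ≥ σ(v)} induce cliques in G, and (ii) for every edge {u, v} ∈ E with σ(u) < σ(v), the set {w ∈ V : σ(u) ≤ σ(w) ≤ σ(v)} induces a clique in G. Let s ≥ 1 and let v₁, …, v_{s+1} denote the first s+1 vertices in the ordering σ. If G admits an s-star partition, then G admits an s-star partition P with {v₁, …, v_{s+1}} ∈ P. -/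
/-!
The proof is an exchange argument. Let `F` be the set of the first `s + 1` vertices, `X` the block
containing the first vertex `r`, and suppose `F` is not contained in `X`. Pick `y ∈ F \ X`, let `Y`
be its block, and redistribute `X ∪ Y` in sorted order: `X'` is the set of its first `s + 1`
vertices and `Y'` the set of its last `s + 1`. Both are stars again (`star_of_center`, applied to
a center of `X` or of `Y`), and `X'` contains `(F ∩ X) ∪ {y}`, because `F` is an initial segment of
the order with only `s + 1` elements. Hence `|F \ X|` drops, and iterating gives `X = F`.

The star property survives because a vertex `c` is adjacent to every vertex lying in the order
between two of its closed neighbors. If `c` dominates a set `Z` in this way and is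
itself outside `Z`, then in the cases needed `Z` lies entirely on one side of `c`, so `Z` is a
clique.
-/

open scoped Classical

/-- An `s`-star partition of a graph `G` : a collection of vertex sets covering
each vertex exactly once, each set of size `s + 1` and containing a (not
necessarily induced) star `K_{1,s}`. -/
def IsStarPartition {V : Type*} [Fintype V] [DecidableEq V]
    (G : SimpleGraph V) (s : ℕ) (P : Finset (Finset V)) : Prop :=
  (∀ X ∈ P, X.card = s + 1 ∧ ∃ c ∈ X, ∀ v ∈ X, v ≠ c → G.Adj c v) ∧
  ∀ v : V, ∃! X, X ∈ P ∧ v ∈ X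

/-- The first `k` elements of a finite set with respect to an injective ranking. -/
lemma exists_initial {V : Type*} [DecidableEq V] {n : ℕ} (σ : V ≃ Fin n) (k : ℕ) (U : Finset V)
    (hk : k ≤ U.card) :
    ∃ A ⊆ U, A.card = k ∧ ∀ a ∈ A, ∀ b ∈ U, b ∉ A → σ a < σ b := by
  induction k with
  | zero => exact ⟨∅, by simp, by simp, by simp⟩
  | succ k ih =>
    obtain ⟨A, hAU, hA, hlt⟩ := ih (by omega)
    have hne : (U \ A).Nonempty := by
      rw [← Finset.card_pos, Finset.card_sdiff_of_subset hAU]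
      omega
    obtain ⟨m, hm, hmin⟩ := Finset.exists_min_image (U \ A) σ hne
    rw [Finset.mem_sdiff] at hm
    refine ⟨insert m A, Finset.insert_subset hm.1 hAU, ?_, ?_⟩
    · rw [Finset.card_insert_of_notMem hm.2, hA]
    · intro a ha b hb hbA
      rw [Finset.mem_insert, not_or] at hbA
      rcases Finset.mem_insert.1 ha with rfl | ha
      · exact lt_of_le_of_ne (hmin b (Finset.mem_sdiff.2 ⟨hb, hbA.2⟩))
          fun h => hbA.1 (σ.injective h.symm)
      · exact hlt a ha b hb hbA.2

/-- A set `Z` contains a spanning star as soon as some vertex `c` has closed neighbors on both sides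
of each element of `Z`, and `c` lies in `Z` or strictly on one side of all of `Z`. -/
lemma star_of_center {V : Type*} {n : ℕ} (G : SimpleGraph V) (σ : V ≃ Fin n)
    (hNl : ∀ v a b, G.Adj v a → G.Adj v b → σ a ≤ σ v → σ b ≤ σ v → a ≠ b →
      G.Adj a b)
    (hNr : ∀ v a b, G.Adj v a → G.Adj v b → σ v ≤ σ a → σ v ≤ σ b → a ≠ b →
      G.Adj a b)
    (hii : ∀ u v, G.Adj u v → σ u < σ v → ∀ a b, a ≠ b →
      σ u ≤ σ a → σ a ≤ σ v → σ u ≤ σ b → σ b ≤ σ v → G.Adj a b)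
    (Z : Finset V) (hZ : Z.Nonempty) (c : V)
    (hp : ∀ z ∈ Z, ∃ p, (p ≠ c → G.Adj c p) ∧ σ p ≤ σ z)
    (hq : ∀ z ∈ Z, ∃ q, (q ≠ c → G.Adj c q) ∧ σ z ≤ σ q)
    (hc : c ∈ Z ∨ (∀ z ∈ Z, σ z < σ c) ∨ (∀ z ∈ Z, σ c < σ z)) :
    ∃ c ∈ Z, ∀ v ∈ Z, v ≠ c → G.Adj c v := by
  have key : ∀ z ∈ Z, z ≠ c → G.Adj c z := by
    intro z hz hzc
    obtain ⟨p, hcp, hpz⟩ := hp z hz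
    obtain ⟨q, hcq, hzq⟩ := hq z hz
    rcases lt_or_gt_of_ne (fun h => hzc (σ.injective h) : σ z ≠ σ c) with h | h
    · have hpc : σ p < σ c := lt_of_le_of_lt hpz h
      have hne : p ≠ c := fun e => (e ▸ hpc).ne rfl
      exact hii p c (hcp hne).symm hpc c z hzc.symm hpc.le le_rfl hpz h.le
    · have hqc : σ c < σ q := lt_of_lt_of_le h hzq
      have hne : q ≠ c := fun e => (e ▸ hqc).ne rfl
      exact hii c q (hcq hne) hqc c z hzc.symm le_rfl hqc.le h.le hzq
  rcases hc with hc | hc | hc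
  · exact ⟨c, hc, key⟩
  · obtain ⟨a, ha⟩ := hZ
    have hne : ∀ z ∈ Z, z ≠ c := fun z hz e => (hc z hz).ne (congrArg σ e)
    exact ⟨a, ha, fun v hv hva => hNl c a v (key a ha (hne a ha)) (key v hv (hne v hv))
      (hc a ha).le (hc v hv).le hva.symm⟩
  · obtain ⟨a, ha⟩ := hZ
    have hne : ∀ z ∈ Z, z ≠ c := fun z hz e => (hc z hz).ne (congrArg σ e.symm)
    exact ⟨a, ha, fun v hv hva => hNr c a v (key a ha (hne a ha)) (key v hv (hne v hv))
      (hc a ha).le (hc v hv).le hva.symm⟩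

/-- Two blocks of a star partition may be replaced by two stars that partition their union. -/
lemma IsStarPartition.replace {V : Type*} [Fintype V] [DecidableEq V] {G : SimpleGraph V} {s : ℕ}
    {P : Finset (Finset V)} (hP : IsStarPartition G s P) {X Y A B : Finset V}
    (hX : X ∈ P) (hY : Y ∈ P) (hAB : Disjoint A B) (hU : A ∪ B = X ∪ Y)
    (hA : A.card = s + 1 ∧ ∃ c ∈ A, ∀ v ∈ A, v ≠ c → G.Adj c v)
    (hB : B.card = s + 1 ∧ ∃ c ∈ B, ∀ v ∈ B, v ≠ c → G.Adj c v) :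
    IsStarPartition G s (insert A (insert B ((P.erase X).erase Y))) := by
  refine ⟨?_, ?_⟩
  · intro Z hZ
    simp only [Finset.mem_insert, Finset.mem_erase] at hZ
    rcases hZ with rfl | rfl | hZ
    · exact hA
    · exact hB
    · exact hP.1 Z hZ.2.2
  · intro v
    obtain ⟨Z, ⟨hZP, hvZ⟩, huniq⟩ := hP.2 v
    have hmem : v ∈ A ∨ v ∈ B ↔ v ∈ X ∨ v ∈ Y := by
      rw [← Finset.mem_union, hU, Finset.mem_union]
    have hd : v ∈ A → v ∉ B := fun h => Finset.disjoint_left.1 hAB h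
    have hold : ∀ W ∈ P, v ∈ W → W = Z := fun W h1 h2 => huniq W ⟨h1, h2⟩
    have hXZ : v ∈ X → X = Z := hold X hX
    have hYZ : v ∈ Y → Y = Z := hold Y hY
    simp only [Finset.mem_insert, Finset.mem_erase]
    by_cases hvA : v ∈ A
    · refine ⟨A, ⟨Or.inl rfl, hvA⟩, ?_⟩
      rintro W ⟨rfl | rfl | ⟨h1, h2, h3⟩, hvW⟩
      · rfl
      · exact absurd hvW (hd hvA)
      · have := hold W h3 hvW
        grind
    · by_cases hvB : v ∈ B
      · refine ⟨B, ⟨Or.inr (Or.inl rfl), hvB⟩, ?_⟩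
        rintro W ⟨rfl | rfl | ⟨h1, h2, h3⟩, hvW⟩
        · exact absurd hvW hvA
        · rfl
        · have := hold W h3 hvW
          grind
      · refine ⟨Z, ⟨Or.inr (Or.inr ⟨?_, ?_, hZP⟩), hvZ⟩, ?_⟩
        · rintro rfl
          tauto
        · rintro rfl
          tauto
        · rintro W ⟨rfl | rfl | ⟨h1, h2, h3⟩, hvW⟩
          · exact absurd hvW hvA
          · exact absurd hvW hvB
          · exact hold W h3 hvW

/-- For a connected graph with an ordering `σ` such that (i) left and right
closed neighborhoods induce cliques (a bicompatible elimination order) and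
(ii) the vertices between the two endpoints of any edge induce a clique (as for
connected unit interval graphs): if `G` admits an `s`-star partition, then it
admits one in which the first `s + 1` vertices form one of the stars. -/
theorem stmt10 {V : Type*} [Fintype V] [DecidableEq V] (G : SimpleGraph V)
    (hconn : G.Connected) (σ : V ≃ Fin (Fintype.card V))
    (hNl : ∀ v a b, G.Adj v a → G.Adj v b → σ a ≤ σ v → σ b ≤ σ v → a ≠ b →
      G.Adj a b)
    (hNr : ∀ v a b, G.Adj v a → G.Adj v b → σ v ≤ σ a → σ v ≤ σ b → a ≠ b →
      G.Adj a b)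
    (hii : ∀ u v, G.Adj u v → σ u < σ v → ∀ a b, a ≠ b →
      σ u ≤ σ a → σ a ≤ σ v → σ u ≤ σ b → σ b ≤ σ v → G.Adj a b)
    (s : ℕ) (hs : 1 ≤ s)
    (hex : ∃ P, IsStarPartition G s P) :
    ∃ P, IsStarPartition G s P ∧
      (Finset.univ.filter fun v => (σ v : ℕ) < s + 1) ∈ P := by
  -- The set of the first `s + 1` vertices; `r` below is the first vertex.
  set F : Finset V := Finset.univ.filter fun v => (σ v : ℕ) < s + 1 with hF
  obtain ⟨P₀, hP₀⟩ := hex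
  obtain ⟨v₀⟩ := hconn.nonempty
  have hn : 0 < Fintype.card V := Fintype.card_pos_iff.2 ⟨v₀⟩
  obtain ⟨r, hr⟩ : ∃ r : V, ∀ v, σ r ≤ σ v :=
    ⟨σ.symm ⟨0, hn⟩, fun v => by simp [Fin.le_def]⟩
  obtain ⟨X₀, ⟨hX₀P, hrX₀⟩, -⟩ := hP₀.2 r
  have hFcard : F.card ≤ s + 1 := by
    have h : F.card ≤ (Finset.range (s + 1)).card := by
      apply Finset.card_le_card_of_injOn (fun v => (σ v : ℕ))
      · intro v hv
        simpa [hF] using hv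
      · intro a _ b _ hab
        exact σ.injective (Fin.ext hab)
    simpa using h
  have hFcard' : s + 1 ≤ F.card := by
    have hle : s + 1 ≤ Fintype.card V := (hP₀.1 X₀ hX₀P).1 ▸ Finset.card_le_univ X₀
    have h : (Finset.univ : Finset (Fin (s + 1))).card ≤ F.card := by
      apply Finset.card_le_card_of_injOn (fun i => σ.symm (Fin.castLE hle i))
      · intro i _
        simpa [hF] using Nat.lt_succ_iff.1 i.isLt
      · intro a _ b _ hab
        simpa using hab
    simpa using h
  suffices H : ∀ k : ℕ, ∀ P X, IsStarPartition G s P → X ∈ P → r ∈ X → (F \ X).card ≤ k →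
      ∃ P, IsStarPartition G s P ∧ F ∈ P from H _ P₀ X₀ hP₀ hX₀P hrX₀ le_rfl
  intro k
  induction k with
  | zero =>
    intro P X hP hX hrX hcard
    have hsub : F ⊆ X := by
      rw [← Finset.sdiff_eq_empty_iff_subset]
      exact Finset.card_eq_zero.1 (Nat.le_zero.1 hcard)
    have : F = X := Finset.eq_of_subset_of_card_le hsub ((hP.1 X hX).1 ▸ hFcard')
    exact ⟨P, hP, this ▸ hX⟩
  | succ k ih =>
    intro P X hP hX hrX hcard
    by_cases hsub : F ⊆ X
    · have : F = X := Finset.eq_of_subset_of_card_le hsub ((hP.1 X hX).1 ▸ hFcard')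
      exact ⟨P, hP, this ▸ hX⟩
    obtain ⟨y, hyF, hyX⟩ := Finset.not_subset.1 hsub
    obtain ⟨Y, ⟨hY, hyY⟩, -⟩ := hP.2 y
    have hXY : Disjoint X Y := by
      rw [Finset.disjoint_left]
      intro v hvX hvY
      have : X = Y := (hP.2 v).unique ⟨hX, hvX⟩ ⟨hY, hvY⟩
      exact hyX (this ▸ hyY)
    obtain ⟨hXc, c, hcX, hc⟩ := hP.1 X hX
    obtain ⟨hYc, d, hdY, hd⟩ := hP.1 Y hY
    have hUc : (X ∪ Y).card = (s + 1) + (s + 1) := by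
      rw [Finset.card_union_of_disjoint hXY, hXc, hYc]
    obtain ⟨A, hAU, hAc, hlt⟩ := exists_initial σ (s + 1) (X ∪ Y) (by omega)
    -- `A` contains every element of `F` in `X ∪ Y`: a missing one would lie above all of `A`,
    -- so that `F` would have more than `s + 1` elements.
    have hFA : ∀ u ∈ F, u ∈ X ∪ Y → u ∈ A := by
      intro u huF huU
      by_contra huA
      have hins : insert u A ⊆ F := by
        apply Finset.insert_subset huF
        intro a ha
        have h1 : (σ a : ℕ) < σ u := hlt a ha u huU huA
        simp only [hF, Finset.mem_filter, Finset.mem_univ, true_and] at huF ⊢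
        omega
      have := Finset.card_le_card hins
      rw [Finset.card_insert_of_notMem huA] at this
      omega
    have hrF : r ∈ F := by
      have h1 : (σ r : ℕ) ≤ σ (σ.symm ⟨0, hn⟩) := hr _
      simp only [Equiv.apply_symm_apply] at h1
      simp only [hF, Finset.mem_filter, Finset.mem_univ, true_and]
      omega
    have hrA : r ∈ A := hFA r hrF (Finset.mem_union_left _ hrX)
    set B := (X ∪ Y) \ A with hB
    have hBc : B.card = s + 1 := by
      rw [hB, Finset.card_sdiff_of_subset hAU]
      omega
    have hltB : ∀ a ∈ A, ∀ b ∈ B, σ a < σ b := fun a ha b hb =>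
      hlt a ha b (Finset.mem_sdiff.1 hb).1 (Finset.mem_sdiff.1 hb).2
    have hside : ∀ v ∈ X ∪ Y, v ∈ A ∨ v ∈ B := fun v hv => by
      by_cases h : v ∈ A
      · exact Or.inl h
      · exact Or.inr (Finset.mem_sdiff.2 ⟨hv, h⟩)
    have hcU : c ∈ X ∪ Y := Finset.mem_union_left _ hcX
    have hdU : d ∈ X ∪ Y := Finset.mem_union_right _ hdY
    have hAstar : ∃ c ∈ A, ∀ v ∈ A, v ≠ c → G.Adj c v := by
      refine star_of_center G σ hNl hNr hii A ⟨r, hrA⟩ c (fun z _ => ⟨r, hc r hrX, hr z⟩) ?_ ?_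
      · -- If `z` were above all of `X`, then `X` would be a subset of `A` avoiding `z`.
        intro z hz
        by_contra! hno
        have hXz : ∀ x ∈ X, σ x < σ z := fun x hx => hno x (hc x hx)
        have hss : X ⊆ A.erase z := by
          intro x hx
          refine Finset.mem_erase.2 ⟨fun e => (hXz x hx).ne (congrArg σ e), ?_⟩
          rcases hside x (Finset.mem_union_left _ hx) with h | h
          · exact h
          · exact absurd (hltB z hz x h) (hXz x hx).not_gt
        have := Finset.card_le_card hss
        rw [Finset.card_erase_of_mem hz] at this
        omega
      · rcases hside c hcU with h | h
        · exact Or.inl h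
        · exact Or.inr (Or.inl fun z hz => hltB z hz c h)
    have hBne : B.Nonempty := Finset.card_pos.1 (by omega)
    have hBstar : ∃ c ∈ B, ∀ v ∈ B, v ≠ c → G.Adj c v := by
      -- The block that contains the largest vertex `w` supplies the dominating center.
      obtain ⟨w, hwB, hw⟩ := Finset.exists_max_image B σ hBne
      rcases Finset.mem_union.1 (Finset.mem_sdiff.1 hwB).1 with hwX | hwY
      · refine star_of_center G σ hNl hNr hii B hBne c (fun z _ => ⟨r, hc r hrX, hr z⟩)
          (fun z hz => ⟨w, hc w hwX, hw z hz⟩) ?_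
        rcases hside c hcU with h | h
        · exact Or.inr (Or.inr fun z hz => hltB c h z hz)
        · exact Or.inl h
      · refine star_of_center G σ hNl hNr hii B hBne d ?_
          (fun z hz => ⟨w, hd w hwY, hw z hz⟩) ?_
        · -- If `z` were below all of `Y`, then `Y` would be a subset of `B` avoiding `z`.
          intro z hz
          by_contra! hno
          have hYz : ∀ x ∈ Y, σ z < σ x := fun x hx => hno x (hd x hx)
          have hss : Y ⊆ B.erase z := by
            intro x hx
            refine Finset.mem_erase.2 ⟨fun e => (hYz x hx).ne (congrArg σ e.symm), ?_⟩
            rcases hside x (Finset.mem_union_right _ hx) with h | h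
            · exact absurd (hltB x h z hz) (hYz x hx).not_gt
            · exact h
          have := Finset.card_le_card hss
          rw [Finset.card_erase_of_mem hz] at this
          omega
        · rcases hside d hdU with h | h
          · exact Or.inr (Or.inr fun z hz => hltB d h z hz)
          · exact Or.inl h
    refine ih _ A (hP.replace hX hY Finset.disjoint_sdiff (Finset.union_sdiff_of_subset hAU)
      ⟨hAc, hAstar⟩ ⟨hBc, hBstar⟩) (Finset.mem_insert_self _ _) hrA ?_
    have hss : F \ A ⊆ (F \ X).erase y := by
      intro u hu
      rw [Finset.mem_sdiff] at hu
      refine Finset.mem_erase.2 ⟨?_, Finset.mem_sdiff.2 ⟨hu.1, fun h => ?_⟩⟩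
      · rintro rfl
        exact hu.2 (hFA _ hyF (Finset.mem_union_right _ hyY))
      · exact hu.2 (hFA _ hu.1 (Finset.mem_union_left _ h))
    have := Finset.card_le_card hss
    rw [Finset.card_erase_of_mem (Finset.mem_sdiff.2 ⟨hyF, hyX⟩)] at this
    omega
end

section
/- Fix an integer s ≥ 3. Let U be a finite set with |U| = s·n elements and S = {S₁, …, S_m} a collection of m ≥ n subsets of U, each of size s. Write m − n = (s − 1)q + r with q ≥ 0 and 0 ≤ r < s − 1. Construct a split graph G = (C ∪ I, E) as follows: C contains one vertex per set in S, plus q + 1 dummy vertices, and C induces a clique; I contains one vertex per element of U, plus q + (s − r) dummy vertices, and I is an independent set; each set vertex in C is adjacent to the s element vertices of I corresponding to its elements; each of the first q dummy vertices of C is adjacent to exactly one of the first q dummy vertices of I (a distinct one for each); the last dummy vertex of C is adjacent to the remaining s − r dummy vertices of I. Then there exists a subcollection S' ⊆ S that partitions U (each element of U belongs to exactly one set of S') if and only if G admits an s-star partition. -/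
/-!
Given an exact cover `S'`, each chosen set vertex is the centre of a star whose leaves are its `s`
elements. Counting elements gives `|S'| = n`, so `(s - 1) q + r` set vertices are left over;
`s - 1` of them are given to each of the first `q` clique dummies and `r` to the last one, which
together with the independent dummies completes stars of size `s + 1`
(`exists_starPartition_of_exactCover`).

Conversely, an `s`-star partition has `n + q + 1` stars. Each clique dummy has a private neighbour
of degree one, so (as `s ≥ 2`) it is the centre of its star; these `q + 1` stars are distinct and
contain no element vertex. The other `n` stars cover all `s n` element vertices, and a star has at
most `s` of these, so each of the `n` stars has exactly `s`. Since `s ≥ 2`, such a star is not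
centred at an element, so it consists of a set vertex and the elements of that set
(`exactCover_of_starPartition`).
-/

open scoped Classical

/-- The split graph constructed from an instance of Exact Cover by `s`-Sets.
The clique side consists of one vertex per set `S i` plus `q + 1` dummy
vertices; the independent side consists of the elements of the universe `α`
plus `q + (s - r)` dummy vertices.  Set vertices are adjacent to the element
vertices corresponding to their members, each of the first `q` clique dummies
is adjacent to exactly one of the first `q` independent dummies, and the last
clique dummy is adjacent to the remaining `s - r` independent dummies. -/
def xcGraph (s m q r : ℕ) (α : Type*) (S : Fin m → Finset α) :
    SimpleGraph ((Fin m ⊕ Fin (q + 1)) ⊕ (α ⊕ (Fin q ⊕ Fin (s - r)))) :=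
  SimpleGraph.fromRel fun x y =>
    match x, y with
    | Sum.inl a, Sum.inl b => a ≠ b
    | Sum.inl (Sum.inl i),Sum.inr (Sum.inl a) => a ∈ S i
    | Sum.inl (Sum.inr d), Sum.inr (Sum.inr (Sum.inl j)) => (d : ℕ) = (j : ℕ)
    | Sum.inl (Sum.inr d), Sum.inr (Sum.inr (Sum.inr _)) => (d : ℕ) = q
    | _, _ => False

/-! ### Counting -/

/-- A family of sets containing every vertex exactly once is met exactly once by each `f b`;
double counting the incidences gives the number of indices. -/
lemma sum_card_preimage {V β : Type*} [Fintype β] (P : Finset (Finset V))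
    (hP : ∀ v : V, ∃! X, X ∈ P ∧ v ∈ X) (f : β → V) :
    ∑ X ∈ P, (Finset.univ.filter fun b => f b ∈ X).card = Fintype.card β := by
  simp only [Finset.card_filter]
  rw [Finset.sum_comm]
  simp only [← Finset.card_filter]
  have : ∀ b : β, (P.filter fun X => f b ∈ X).card = 1 := by
    intro b
    obtain ⟨X, hX, hu⟩ := hP (f b)
    rw [Finset.card_eq_one]
    refine ⟨X, ?_⟩
    ext Y
    simp only [Finset.mem_filter, Finset.mem_singleton]
    exact ⟨fun h => hu Y h, fun h => h ▸ hX⟩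
  simp [this]

/-- A finite set can be distributed among boxes with prescribed sizes `w`. -/
lemma exists_distribution {γ β : Type*} [Fintype β] [Nonempty β] (T : Finset γ) (w : β → ℕ)
    (hw : ∑ b, w b = T.card) :
    ∃ h : γ → β, ∀ b, (T.filter fun t => h t = b).card = w b := by
  have e : T ≃ (Σ b, Fin (w b)) := Fintype.equivOfCardEq (by simp [hw])
  refine ⟨fun t => if ht : t ∈ T then (e ⟨t, ht⟩).1 else Classical.arbitrary β, fun b => ?_⟩
  rw [← Fintype.card_fin (w b), ← Finset.card_univ]
  symm
  refine Finset.card_bij (fun k _ => (e.symm ⟨b, k⟩ : γ)) ?_ ?_ ?_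
  · intro k _
    simp
  · intro k _ k' _ h
    have := e.symm.injective (Subtype.ext h)
    simpa using this
  · intro t ht
    obtain ⟨htT, hb⟩ := Finset.mem_filter.1 ht
    clear ht
    simp only [htT, dite_true] at hb
    subst hb
    exact ⟨(e ⟨t, htT⟩).2, Finset.mem_univ _, by simp⟩

/-! ### Adjacency in the split graph -/

section Adjacency

variable {s m q r : ℕ} {α : Type*} {S : Fin m → Finset α}

lemma adj_clique {a b : Fin m ⊕ Fin (q + 1)} :
    (xcGraph s m q r α S).Adj (.inl a) (.inl b) ↔ a ≠ b := by
  simp only [xcGraph, SimpleGraph.fromRel_adj]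
  grind

lemma adj_indep {a b : α ⊕ (Fin q ⊕ Fin (s - r))} :
    ¬ (xcGraph s m q r α S).Adj (.inr a) (.inr b) := by
  simp [xcGraph]

lemma adj_set_elem {i : Fin m} {a : α} :
    (xcGraph s m q r α S).Adj (.inl (.inl i)) (.inr (.inl a)) ↔ a ∈ S i := by
  simp [xcGraph]

lemma adj_set_dummy {i : Fin m} {a : Fin q ⊕ Fin (s - r)} :
    ¬ (xcGraph s m q r α S).Adj (.inl (.inl i)) (.inr (.inr a)) := by
  simp [xcGraph]

lemma adj_dummy_elem {d : Fin (q + 1)} {a : α} :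
    ¬ (xcGraph s m q r α S).Adj (.inl (.inr d)) (.inr (.inl a)) := by
  simp [xcGraph]

lemma adj_dummy_fst {d : Fin (q + 1)} {j : Fin q} :
    (xcGraph s m q r α S).Adj (.inl (.inr d)) (.inr (.inr (.inl j))) ↔ (d : ℕ) = j := by
  simp [xcGraph]

lemma adj_dummy_snd {d : Fin (q + 1)} {j : Fin (s - r)} :
    (xcGraph s m q r α S).Adj (.inl (.inr d)) (.inr (.inr (.inr j))) ↔ (d : ℕ) = q := by
  simp [xcGraph]

/-- Each clique dummy has a neighbour of degree one. -/
lemma exists_private_neighbour (hr : r < s) (d : Fin (q + 1)) :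
    ∃ y : Fin q ⊕ Fin (s - r), ∀ v, (xcGraph s m q r α S).Adj v (.inr (.inr y)) ↔
      v = .inl (.inr d) := by
  by_cases hd : (d : ℕ) = q
  · refine ⟨.inr ⟨0, by omega⟩, ?_⟩
    rintro ((i | d') | v)
    · simp [adj_set_dummy]
    · simp [adj_dummy_snd, Fin.ext_iff, hd]
    · simp [adj_indep]
  · refine ⟨.inl ⟨d, by omega⟩, ?_⟩
    rintro ((i | d') | v)
    · simp [adj_set_dummy]
    · simp [adj_dummy_fst, Fin.ext_iff]
    · simp [adj_indep]

end Adjacency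

/-! ### From an exact cover to a star partition -/

/-- The fibres of `g` form a star partition once each of them has size `s + 1` and a centre. -/
lemma isStarPartition_of_fibres {V β : Type*} [Fintype V] [DecidableEq V]
    (G : SimpleGraph V) (s : ℕ) (g : V → β)
    (hcard : ∀ v, (Finset.univ.filter fun w => g w = g v).card = s + 1)
    (hstar : ∀ v, ∃ c, g c = g v ∧ ∀ w, g w = g v → w ≠ c → G.Adj c w) :
    ∃ P, IsStarPartition G s P := by
  refine ⟨Finset.univ.image fun v => Finset.univ.filter fun w => g w = g v, ?_, ?_⟩
  · intro X hX
    obtain ⟨v, -, rfl⟩ := Finset.mem_image.1 hX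
    obtain ⟨c, hc, h⟩ := hstar v
    exact ⟨hcard v, c, by simpa using hc, fun w hw => h w (by simpa using hw)⟩
  · intro v
    refine ⟨Finset.univ.filter fun w => g w = g v, ⟨by simp, by simp⟩, ?_⟩
    rintro X ⟨hX, hv⟩
    obtain ⟨u, -, rfl⟩ := Finset.mem_image.1 hX
    simp only [Finset.mem_filter, Finset.mem_univ, true_and] at hv
    simp [hv]

lemma exists_starPartition_of_exactCover (s n m q r : ℕ) (hs : 3 ≤ s)
    (α : Type*) [Fintype α] [DecidableEq α]
    (hα : Fintype.card α = s * n)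
    (S : Fin m → Finset α) (hS : ∀ i, (S i).card = s)
    (hqr : m = n + (s - 1) * q + r) (hr : r < s - 1)
    (S' : Finset (Fin m)) (hS' : ∀ a : α, ∃! i, i ∈ S' ∧ a ∈ S i) :
    ∃ P, IsStarPartition (xcGraph s m q r α S) s P := by
  choose cov hcov hcovu using hS'
  have hfib : ∀ i ∈ S', (Finset.univ.filter fun a => cov a = i) = S i := by
    intro i hi
    ext a
    simp only [Finset.mem_filter, Finset.mem_univ, true_and]
    exact ⟨fun h => h ▸ (hcov a).2, fun h => (hcovu a i ⟨hi, h⟩).symm⟩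
  have hn : S'.card = n := by
    have h := Finset.card_eq_sum_card_fiberwise (f := cov) (s := Finset.univ) (t := S')
      (fun a _ => (hcov a).1)
    rw [Finset.sum_congr rfl fun i hi => by rw [hfib i hi, hS i]] at h
    simp only [Finset.card_univ, hα, Finset.sum_const, smul_eq_mul] at h
    rw [mul_comm] at h
    exact (Nat.eq_of_mul_eq_mul_right (by omega) h).symm
  have hT : ∑ d : Fin (q + 1), (if (d : ℕ) = q then r else s - 1) = S'ᶜ.card := by
    rw [Fin.sum_univ_castSucc]
    have : ∀ x : Fin q, (x : ℕ) ≠ q := fun x => x.2.ne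
    simp only [Fin.val_castSucc, this, if_false, Finset.sum_const, Finset.card_univ,
      Fintype.card_fin, smul_eq_mul, Fin.val_last, if_true, Finset.card_compl, hn]
    rw [mul_comm]
    omega
  obtain ⟨h, hh⟩ := exists_distribution S'ᶜ _ hT
  -- Each vertex is sent to the centre of its star.
  let g : (Fin m ⊕ Fin (q + 1)) ⊕ (α ⊕ (Fin q ⊕ Fin (s - r))) → Fin m ⊕ Fin (q + 1) :=
    Sum.elim (Sum.elim (fun i => if i ∈ S' then .inl i else .inr (h i)) .inr)
      (Sum.elim (fun a => .inl (cov a))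
        (Sum.elim (fun j => .inr j.castSucc) (fun _ => .inr (Fin.last q))))
  have g1 : ∀ i, g (.inl (.inl i)) = if i ∈ S' then .inl i else .inr (h i) := fun _ => rfl
  have g2 : ∀ d, g (.inl (.inr d)) = .inr d := fun _ => rfl
  have g3 : ∀ a, g (.inr (.inl a)) = .inl (cov a) := fun _ => rfl
  have g4 : ∀ j, g (.inr (.inr (.inl j))) = .inr j.castSucc := fun _ => rfl
  have g5 : ∀ j, g (.inr (.inr (.inr j))) = .inr (Fin.last q) := fun _ => rfl
  have hrange : ∀ v, (∃ i ∈ S', g v = .inl i) ∨ ∃ d, g v = .inr d := by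
    rintro ((i | d) | (a | (j | j)))
    · by_cases hi : i ∈ S' <;> simp [g1, hi]
    · simp [g2]
    · simpa [g3] using (hcov a).1
    · simp [g4]
    · simp [g5]
  refine isStarPartition_of_fibres _ s g ?_ ?_
  · intro v
    rw [Finset.card_filter]
    simp only [Fintype.sum_sum_type, g1, g2, g3, g4, g5]
    obtain ⟨i, hi, hv⟩ | ⟨d, hv⟩ := hrange v
    · rw [hv]
      have e1 : ∑ x : Fin m, (if (if x ∈ S' then Sum.inl x else Sum.inr (h x)) =
          (Sum.inl i : Fin m ⊕ Fin (q + 1)) then 1 else 0) = 1 := by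
        rw [← Finset.card_filter, Finset.card_eq_one]
        refine ⟨i, ?_⟩
        ext x
        by_cases hx : x ∈ S'
        · simp [hx]
        · simp [hx]
          rintro rfl
          exact hx hi
      rw [e1]
      simp [hfib i hi, hS, add_comm]
    · rw [hv]
      have e1 : ∑ x : Fin m, (if (if x ∈ S' then Sum.inl x else Sum.inr (h x)) =
          (Sum.inr d : Fin m ⊕ Fin (q + 1)) then 1 else 0) = if (d : ℕ) = q then r else s - 1 := by
        rw [← Finset.card_filter, ← hh d]
        congr 1
        ext x
        by_cases hx : x ∈ S' <;> simp [hx]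
      rw [e1]
      induction d using Fin.lastCases with
      | last =>
        have : ∀ x : Fin q, x.castSucc ≠ Fin.last q := fun x => (Fin.castSucc_lt_last x).ne
        simp [this]
        omega
      | cast j =>
        have : ∀ x : Fin q, Fin.last q ≠ x.castSucc := fun x => (Fin.castSucc_lt_last x).ne'
        have : (j : ℕ) ≠ q := j.2.ne
        simp [*]
        omega
  · intro v
    obtain ⟨i, hi, hv⟩ | ⟨d, hv⟩ := hrange v
    · refine ⟨.inl (.inl i), by simp [g1, hi, hv], ?_⟩
      rw [hv]
      rintro ((x | x) | (a | (x | x))) hw hne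
      · by_cases hx : x ∈ S' <;> simp_all
      · simp [g2] at hw
      · rw [g3] at hw
        rw [adj_set_elem]
        simp only [Sum.inl.injEq] at hw
        exact hw ▸ (hcov a).2
      · simp [g4] at hw
      · simp [g5] at hw
    · refine ⟨.inl (.inr d), by simp [g2, hv], ?_⟩
      rw [hv]
      rintro ((x | x) | (a | (x | x))) hw hne
      · simp [adj_clique]
      · simp_all
      · simp [g3] at hw
      · simp only [g4, Sum.inr.injEq] at hw
        simp [adj_dummy_fst, ← hw]
      · simp only [g5, Sum.inr.injEq] at hw
        simp [adj_dummy_snd, ← hw]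

/-! ### From a star partition to an exact cover -/

lemma exactCover_of_starPartition (s n m q r : ℕ) (hs : 3 ≤ s)
    (α : Type*) [Fintype α] [DecidableEq α]
    (hα : Fintype.card α = s * n)
    (S : Fin m → Finset α) (hS : ∀ i, (S i).card = s)
    (hqr : m = n + (s - 1) * q + r) (hr : r < s - 1)
    (P : Finset (Finset ((Fin m ⊕ Fin (q + 1)) ⊕ (α ⊕ (Fin q ⊕ Fin (s - r))))))
    (hP : IsStarPartition (xcGraph s m q r α S) s P) :
    ∃ S' : Finset (Fin m), ∀ a : α, ∃! i, i ∈ S' ∧ a ∈ S i := by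
  obtain ⟨hstar, hpart⟩ := hP
  have hPcard : P.card = n + q + 1 := by
    have h : ∑ X ∈ P, (s + 1) =
        Fintype.card ((Fin m ⊕ Fin (q + 1)) ⊕ (α ⊕ (Fin q ⊕ Fin (s - r)))) := by
      rw [← sum_card_preimage P hpart id]
      refine Finset.sum_congr rfl fun X hX => ?_
      rw [← (hstar X hX).1]
      congr 1
      ext
      simp
    simp only [Finset.sum_const, smul_eq_mul, Fintype.card_sum, Fintype.card_fin, hα] at h
    obtain ⟨t, rfl⟩ : ∃ t, s = t + 1 := ⟨s - 1, by omega⟩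
    have h2 : P.card * (t + 1 + 1) = (n + q + 1) * (t + 1 + 1) := by
      rw [h, hqr]
      simp only [Nat.add_sub_cancel] at hr ⊢
      obtain ⟨k, rfl⟩ : ∃ k, t = r + k := ⟨t - r, by omega⟩
      rw [show r + k + 1 - r = k + 1 by omega]
      ring
    exact Nat.eq_of_mul_eq_mul_right (by omega) h2
  let E : Finset ((Fin m ⊕ Fin (q + 1)) ⊕ (α ⊕ (Fin q ⊕ Fin (s - r)))) → Finset α :=
    fun X => Finset.univ.filter fun a => Sum.inr (Sum.inl a) ∈ X
  have hE : ∀ X a, a ∈ E X ↔ Sum.inr (Sum.inl a) ∈ X := by intro X a; simp [E]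
  have hEsum : ∑ X ∈ P, (E X).card = s * n := by
    rw [← hα]
    convert sum_card_preimage P hpart fun a => Sum.inr (Sum.inl a)
  -- A star contains a clique vertex, besides the element vertices.
  have hclique : ∀ X ∈ P, ∃ c, Sum.inl c ∈ X := by
    intro X hX
    obtain ⟨hc, c, hcX, hadj⟩ := hstar X hX
    obtain ⟨v, hv, hne⟩ := Finset.exists_mem_ne (by omega : 1 < X.card) c
    have := hadj v hv hne
    rcases c with c | c
    · exact ⟨c, hcX⟩
    · rcases v with v | v
      · exact ⟨v, hv⟩
      · exact absurd this adj_indep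
  have hEle : ∀ X ∈ P, (E X).card ≤ s := by
    intro X hX
    obtain ⟨c, hc⟩ := hclique X hX
    have hsub : (E X).image (fun a => Sum.inr (Sum.inl a)) ⊆ X.erase (Sum.inl c) := by
      intro v hv
      obtain ⟨a, ha, rfl⟩ := Finset.mem_image.1 hv
      simpa using (hE X a).1 ha
    have := Finset.card_le_card hsub
    rw [Finset.card_image_of_injective _ (fun a b h => by simpa using h),
      Finset.card_erase_of_mem hc, (hstar X hX).1] at this
    simpa using this
  -- `D d` is the star of the clique dummy `d`, centred at `d` because it is the star of the
  -- private neighbour of `d`.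
  have hD : ∀ d : Fin (q + 1), ∃ X ∈ P, Sum.inl (Sum.inr d) ∈ X ∧
      (∀ v ∈ X, v ≠ Sum.inl (Sum.inr d) → (xcGraph s m q r α S).Adj (Sum.inl (Sum.inr d)) v) ∧
      ∃ y, (∀ v, (xcGraph s m q r α S).Adj v (Sum.inr (Sum.inr y)) ↔ v = Sum.inl (Sum.inr d)) ∧
        Sum.inr (Sum.inr y) ∈ X := by
    intro d
    obtain ⟨y, hy⟩ := exists_private_neighbour (α := α) (S := S) (show r < s by omega) d
    obtain ⟨X, ⟨hX, hyX⟩, -⟩ := hpart (Sum.inr (Sum.inr y))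
    obtain ⟨hc, c, hcX, hadj⟩ := hstar X hX
    have hcy : c ≠ Sum.inr (Sum.inr y) := by
      rintro rfl
      have hsub : X ⊆ {Sum.inr (Sum.inr y), Sum.inl (Sum.inr d)} := by
        intro v hv
        by_cases hne : v = Sum.inr (Sum.inr y)
        · simp [hne]
        · simp [(hy v).1 (hadj v hv hne).symm]
      have := (Finset.card_le_card hsub).trans Finset.card_le_two
      omega
    have := (hy c).1 (hadj _ hyX hcy.symm)
    subst this
    exact ⟨X, hX, hcX, hadj, y, hy, hyX⟩
  choose D hDP hDmem hDadj hDpriv using hD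
  have hDinj : Function.Injective D := by
    intro d d' h
    by_contra hne
    -- Two clique dummies in the same star would both be its centre, but then the private
    -- neighbour of the first would be adjacent to the second.
    obtain ⟨y, hy, hyD⟩ := hDpriv d
    rw [h] at hyD
    have := (hy _).1 (hDadj d' _ hyD (by simp))
    simp only [Sum.inl.injEq, Sum.inr.injEq] at this
    exact hne this.symm
  have hDE : ∀ d, E (D d) = ∅ := by
    intro d
    rw [Finset.eq_empty_iff_forall_notMem]
    intro a ha
    exact adj_dummy_elem (hDadj d _ ((hE _ _).1 ha) (by simp))
  -- The `n` stars without a clique dummy share the `s n` elements, at most `s` in each.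
  have hEeq : ∀ X ∈ P, (E X).Nonempty → (E X).card = s := by
    let Q := P \ Finset.univ.image D
    have hDsub : Finset.univ.image D ⊆ P := by
      intro X hX
      obtain ⟨d, -, rfl⟩ := Finset.mem_image.1 hX
      exact hDP d
    have hQ : Q.card = n := by
      rw [Finset.card_sdiff_of_subset hDsub, Finset.card_image_of_injective _ hDinj, hPcard]
      simp [add_assoc]
    have hQsum : ∑ X ∈ Q, (E X).card = ∑ X ∈ Q, s := by
      rw [Finset.sum_const, hQ, smul_eq_mul, mul_comm, ← hEsum]
      refine Finset.sum_subset Finset.sdiff_subset ?_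
      intro X hX hXQ
      have : X ∈ Finset.univ.image D := by
        by_contra h
        exact hXQ (Finset.mem_sdiff.2 ⟨hX, h⟩)
      obtain ⟨d, -, rfl⟩ := Finset.mem_image.1 this
      simp [hDE]
    have hall := (Finset.sum_eq_sum_iff_of_le
      (fun X hX => hEle X (Finset.mem_sdiff.1 hX).1)).1 hQsum
    intro X hX hne
    refine hall X (Finset.mem_sdiff.2 ⟨hX, fun h => ?_⟩)
    obtain ⟨d, -, rfl⟩ := Finset.mem_image.1 h
    simp [hDE] at hne
  refine ⟨Finset.univ.filter fun i => ∃ X ∈ P, Sum.inl (Sum.inl i) ∈ X ∧ S i ⊆ E X, ?_⟩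
  intro a
  obtain ⟨X, ⟨hX, haX⟩, hXu⟩ := hpart (Sum.inr (Sum.inl a))
  obtain ⟨hc, c, hcX, hadj⟩ := hstar X hX
  have haE := (hE X a).2 haX
  have hEs := hEeq X hX ⟨a, haE⟩
  have hcenter : ∃ i, c = Sum.inl (Sum.inl i) := by
    rcases c with (i | d) | x
    · exact ⟨i, rfl⟩
    · exact absurd (hadj _ haX (by simp)) adj_dummy_elem
    · exfalso
      have h1 : (E X).card ≤ 1 := by
        rw [Finset.card_le_one]
        have : ∀ b ∈ E X, Sum.inl b = x := by
          intro b hb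
          by_contra hne
          exact adj_indep (hadj _ ((hE X b).1 hb) (by simpa using hne))
        intro b hb b' hb'
        have := (this b hb).trans (this b' hb').symm
        simpa using this
      omega
  obtain ⟨i, rfl⟩ := hcenter
  have hSE : S i = E X := by
    symm
    refine Finset.eq_of_subset_of_card_le ?_ (by rw [hS, hEs])
    intro b hb
    exact adj_set_elem.1 (hadj _ ((hE X b).1 hb) (by simp))
  refine ⟨i, ⟨?_, hSE ▸ haE⟩, ?_⟩
  · simp only [Finset.mem_filter, Finset.mem_univ, true_and]
    exact ⟨X, hX, hcX, hSE.le⟩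
  · rintro i' ⟨hi', hai'⟩
    simp only [Finset.mem_filter, Finset.mem_univ, true_and] at hi'
    obtain ⟨Y, hY, hiY, hSY⟩ := hi'
    obtain rfl := hXu Y ⟨hY, (hE Y a).1 (hSY hai')⟩
    -- Otherwise the star contains `s` elements and two set vertices.
    by_contra hne
    have hsub : insert (Sum.inl (Sum.inl i)) (insert (Sum.inl (Sum.inl i'))
        ((E Y).image (fun a => Sum.inr (Sum.inl a)))) ⊆ Y := by
      intro v hv
      simp only [Finset.mem_insert, Finset.mem_image] at hv
      rcases hv with rfl | rfl | ⟨b, hb, rfl⟩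
      · exact hcX
      · exact hiY
      · exact (hE Y b).1 hb
    have := Finset.card_le_card hsub
    rw [Finset.card_insert_of_notMem (by simp [Ne.symm hne]),
      Finset.card_insert_of_notMem (by simp),
      Finset.card_image_of_injective _ (fun a b h => by simpa using h)] at this
    omega


/-- Exact Cover by `s`-Sets (`s ≥ 3`) has a solution iff the constructed split
graph admits an `s`-star partition. -/
theorem stmt11 (s n m q r : ℕ) (hs : 3 ≤ s)
    (α : Type*) [Fintype α] [DecidableEq α]
    (hα : Fintype.card α = s * n) (hm : n ≤ m)
    (S : Fin m → Finset α) (hS : ∀ i, (S i).card = s)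
    (hqr : m = n + (s - 1) * q + r) (hr : r < s - 1) :
    (∃ S' : Finset (Fin m), ∀ a : α, ∃! i, i ∈ S' ∧ a ∈ S i) ↔
      ∃ P, IsStarPartition (xcGraph s m q r α S) s P := by
  constructor
  · rintro ⟨S', hS'⟩
    exact exists_starPartition_of_exactCover s n m q r hs α hα S hS hqr hr S' hS'
  · rintro ⟨P, hP⟩
    exact exactCover_of_starPartition s n m q r hs α hα S hS hqr hr P hP
end

section
/- Let (R, B, Y, T ⊆ R × B × Y) be a 3-Dimensional Matching instance with |R| = |B| = |Y| = q, and let G be the graph with vertex set {u_a, u'_a : a ∈ R ∪ B ∪ Y} ∪ {v^t_r, v^t_b, v^t_y : t = (r, b, y) ∈ T} and edge set consisting of: the pendant edges {u_a, u'_a} for all a ∈ R ∪ B ∪ Y; for each triple t = (r, b, y) ∈ T the edges {u_r, v^t_r}, {u_b, v^t_b}, {u_y, v^t_y}, {v^t_r, v^t_b}, {v^t_b, v^t_y}, {v^t_b, u_r}, {v^t_b, u_y}; and all edges between pairs of distinct element-vertices u_a, u_{a'} (so that the element-vertices form a clique). Then G is a chordal graph, i.e., every cycle of length at least four in G has a chord.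 -/
/-! Assign rank `0` to the pendant-vertices and to `v^t_r`, `v^t_y`, rank `1` to `v^t_b`, and
rank `2` to the element-vertices.  For every vertex, its neighbours of at least its own rank form a
clique (`tdmRank_clique`), so ordering by rank gives a perfect elimination ordering.  On a cycle of
length at least four, a vertex of minimal rank therefore has two adjacent neighbours along the
cycle, and the edge between them is a chord (`exists_chord_of_rank`). -/

/-- The graph constructed from a 3-Dimensional Matching instance
`T ⊆ ρ × β × γ`.  Vertices: element-vertices `u_a` (first summand),
pendant-vertices `u'_a` (second summand) and triple-vertices
`v^t_r = (t, 0)`, `v^t_b = (t, 1)`, `v^t_y = (t, 2)` (third summand).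
Edges: pendant edges `{u_a, u'_a}`; for every triple `t = (r, b, y) ∈ T` the
edges `{u_r, v^t_r}`, `{u_b, v^t_b}`, `{u_y, v^t_y}`, `{v^t_r, v^t_b}`,
`{v^t_b, v^t_y}`, `{v^t_b, u_r}`, `{v^t_b, u_y}`; and all edges between
distinct element-vertices. -/
def tdmGraph {ρ β γ : Type*} (T : Finset (ρ × β × γ)) :
    SimpleGraph ((ρ ⊕ β ⊕ γ) ⊕ ((ρ ⊕ β ⊕ γ) ⊕ ({p : ρ × β × γ // p ∈ T} × Fin 3))) :=
  SimpleGraph.fromRel fun x y =>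
    match x, y with
    | Sum.inl a, Sum.inl a' => a ≠ a'
    | Sum.inl a, Sum.inr (Sum.inl a') => a = a'
    | Sum.inl a, Sum.inr (Sum.inr (t, j)) =>
        (j = 0 ∧ a = Sum.inl t.1.1) ∨
        (j = 1 ∧ a = Sum.inr (Sum.inl t.1.2.1)) ∨
        (j = 2 ∧ a = Sum.inr (Sum.inr t.1.2.2)) ∨
        (j = 1 ∧ a = Sum.inl t.1.1) ∨
        (j = 1 ∧ a = Sum.inr (Sum.inr t.1.2.2))
    | Sum.inr (Sum.inr (t, j)), Sum.inr (Sum.inr (t', j')) =>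
        t = t' ∧ ((j = 0 ∧ j' = 1) ∨ (j = 1 ∧ j' = 2))
    | _, _ => False

/-- The two neighbours along a cycle of its base point are not joined by a further edge of the
cycle, unless the cycle is a triangle. -/
lemma snd_penultimate_not_mem_edges {V : Type*} {G : SimpleGraph V} {v : V} (c : G.Walk v v)
    (hc : c.IsCycle) (h4 : 4 ≤ c.length) : s(c.snd, c.penultimate) ∉ c.edges := by
  intro h
  obtain ⟨i, hi, he⟩ : ∃ i < c.length,
      s(c.getVert i, c.getVert (i + 1)) = s(c.snd, c.penultimate) :=
    c.mk_mem_edges_iff_exists.mp h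
  -- `getVert` is injective on the indices `1, …, length`; index `0` is traded for `length`.
  have inj : ∀ a b, 1 ≤ a → a ≤ c.length → 1 ≤ b → b ≤ c.length →
      c.getVert a = c.getVert b → a = b := fun a b h1 h2 h3 h4 h5 =>
    hc.getVert_injOn ⟨h1, h2⟩ ⟨h3, h4⟩ h5
  have h0 : c.getVert 0 = c.getVert c.length := by simp
  rw [Sym2.eq_iff] at he
  simp only [SimpleGraph.Walk.snd, SimpleGraph.Walk.penultimate] at he
  rcases he with ⟨h1, h2⟩ | ⟨h1, h2⟩
  · have := inj _ _ (by omega) (by omega) (by omega) (by omega) h2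
    have := inj _ _ (by omega) (by omega) (by omega) (by omega) h1
    omega
  · have := inj _ _ (by omega) (by omega) (by omega) (by omega) h2
    obtain rfl : i = 0 := by omega
    rw [h0] at h1
    have := inj _ _ (by omega) (by omega) (by omega) (by omega) h1
    omega

/-- A graph with a (not necessarily injective) ranking in which the neighbours of rank at least
that of `x` form a clique, for every `x`, is chordal. -/
lemma exists_chord_of_rank {V : Type*} {G : SimpleGraph V} (f : V → ℕ)
    (hf : ∀ x y z, G.Adj x y → G.Adj x z → f x ≤ f y → f x ≤ f z → y ≠ z → G.Adj y z)
    {v : V} (c : G.Walk v v) (hc : c.IsCycle) (h4 : 4 ≤ c.length) :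
    ∃ x y, x ∈ c.support ∧ y ∈ c.support ∧ G.Adj x y ∧ s(x, y) ∉ c.edges := by
  classical
  obtain ⟨x, hx, hmin⟩ := c.support.toFinset.exists_min_image f ⟨v, by simp⟩
  simp only [List.mem_toFinset] at hx hmin
  have hd := hc.rotate hx
  have hlen : (c.rotate x hx).length = c.length := by simp
  have hnot := snd_penultimate_not_mem_edges _ hd (by omega)
  have hsupp : ∀ y, y ∈ (c.rotate x hx).support → y ∈ c.support := fun y hy => by simpa using hy
  have h1 := hsupp _ ((c.rotate x hx).getVert_mem_support 1)
  have h2 := hsupp _ ((c.rotate x hx).getVert_mem_support ((c.rotate x hx).length - 1))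
  refine ⟨(c.rotate x hx).snd, (c.rotate x hx).penultimate, h1, h2, ?_, ?_⟩
  · exact hf x _ _ ((c.rotate x hx).adj_snd hd.not_nil) ((c.rotate x hx).adj_penultimate hd.not_nil).symm
      (hmin _ h1) (hmin _ h2) hd.snd_ne_penultimate
  · rwa [(c.rotate_edges x hx).perm.mem_iff] at hnot

/-- The elimination rank of a vertex of `tdmGraph`; lower ranks are eliminated first. -/
def tdmRank {E S : Type*} : E ⊕ (E ⊕ (S × Fin 3)) → ℕ
  | Sum.inl _ => 2
  | Sum.inr (Sum.inl _) => 0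
  | Sum.inr (Sum.inr (_, j)) => if j = 1 then 1 else 0

lemma tdmRank_clique {ρ β γ : Type*} (T : Finset (ρ × β × γ)) :
    ∀ x y z, (tdmGraph T).Adj x y → (tdmGraph T).Adj x z → tdmRank x ≤ tdmRank y →
      tdmRank x ≤ tdmRank z → y ≠ z → (tdmGraph T).Adj y z := by
  rintro (a | a | ⟨t, j⟩) (b | b | ⟨t', j'⟩) (d | d | ⟨t'', j''⟩) <;>
    simp only [tdmGraph, SimpleGraph.fromRel_adj, tdmRank] <;> grind

/-- The graph constructed from a 3-Dimensional Matching instance is chordal: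
every cycle of length at least four has a chord. -/
theorem stmt12 {ρ β γ : Type*} [Fintype ρ] [Fintype β] [Fintype γ]
    (q : ℕ) (hρ : Fintype.card ρ = q) (hβ : Fintype.card β = q)
    (hγ : Fintype.card γ = q) (T : Finset (ρ × β × γ)) :
    ∀ (v) (c : (tdmGraph T).Walk v v), c.IsCycle → 4 ≤ c.length →
      ∃ x y, x ∈ c.support ∧ y ∈ c.support ∧ (tdmGraph T).Adj x y ∧
        s(x, y) ∉ c.edges := by
  intro v c hc h4
  exact exists_chord_of_rank tdmRank (tdmRank_clique T) c hc h4
end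

section
/- Let G be an interval graph on n vertices given by an interval representation in which each vertex u is a right-open interval [birth(u), death(u)) with all 2n endpoints pairwise distinct and lying in {1, …, 2n}. Consider the procedure that maintains a handle list A (a list of intervals sorted by decreasing end point), starting from the empty list, and processes the event points t = 1, …, 2n in increasing order: if t = birth(x), it inserts two copies of x into A; if t = death(x) and x ∉ A, it leaves A unchanged; if t = death(x) and x ∈ A, it fails if |A| < 3, and otherwise removes the three elements of A with the earliest end points. Then this procedure processes all 2n event points without failing if and only if G admits a P₃-partition. -/
/-!
Every step of the procedure either inserts two copies, called handles, of an interval or removes the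
three handles with the earliest end points.

*Success gives a partition.* Call an interval with exactly one copy left in the handle list a
*single*, and one with both copies left *untouched*. As handles are removed in order of end points,
an interval that has just become a single dies before all other members of the list, so the singles
form a stack with its top at the earliest end point. The invariant `RunInv` says that every
single `s` has a partner `p` without handles that meets both `s` and the single just below `s`, and
that all other intervals without handles are already partitioned into `P₃`s. The three removed handles
can only have four shapes, and each preserves the invariant (`remove_core`):
* `x, x, z` with `x`, `z` untouched: `z` becomes the top of the stack, with partner `x`;
* one single `s` with partner `p`, and both handles of an untouched `x`: `p - s - x` is a path;
* two singles `s`, `s'` (partners `p`, `p'`) and one handle of `z`: `p' - s' - p` is a path and `s`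
  becomes the partner of the new top `z`;
* three singles `s`, `s'`, `s''`: `p' - s' - p` and `p'' - s'' - s` are paths.
In the end the list is empty, so all intervals are partitioned.

*A partition gives success.* In a connected triple the member `x` that dies first meets another
member `w`, and the third member `o` meets `w` before `w` dies. This gives a strategy: remove
`x, x, w` when `x` dies and `w, o, o` when `w` or `o` dies first. The function `load` counts the
handles that this strategy keeps and that have end point at least `s`. The greedy list always
dominates the strategy, having at least as many handles beyond every threshold `s`, while the
two lengths agree modulo three (`Dom`). If `x` dies in the greedy list while the strategy removes
nothing, then all handles of the strategy die later than `x`, so the greedy list is longer,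
hence longer by at least three. Thus the greedy list can always afford its removal.
-/

open scoped Classical

/-- A `P₃`-partition of a graph `G`: a collection of vertex sets covering each
vertex exactly once, each of size three and inducing a subgraph that contains a
path on three vertices. -/
def IsP3Partition {V : Type*} [Fintype V] [DecidableEq V]
    (G : SimpleGraph V) (P : Finset (Finset V)) : Prop :=
  (∀ X ∈ P, X.card = 3 ∧ ∃ a ∈ X, ∃ b ∈ X, ∃ c ∈ X,
    a ≠ b ∧ a ≠ c ∧ b ≠ c ∧ G.Adj a b ∧ G.Adj b c) ∧
  ∀ v : V, ∃! X, X ∈ P ∧ v ∈ X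

/-- The interval graph of the right-open intervals `[birth x, death x)`:
two distinct intervals are adjacent iff they intersect. -/
def intervalGraph {n : ℕ} (birth death : Fin n → ℕ) : SimpleGraph (Fin n) :=
  SimpleGraph.fromRel fun x y => birth x < death y ∧ birth y < death x

/-- One step of the handle-list procedure at event point `t`.  The handle list
`A` is kept sorted by decreasing end points.  If `t` is the start point of an
interval `x`, two copies of `x` are inserted; if `t` is the end point of an
interval `x ∈ A`, the procedure fails when `|A| < 3` and otherwise removes the
three elements of `A` with the earliest end points (the last three); otherwise
`A` is unchanged. -/
noncomputable def stepA {n : ℕ} (birth death : Fin n → ℕ)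
    (A : List (Fin n)) (t : ℕ) : Option (List (Fin n)) :=
  if hb : ∃ x, birth x = t then
    some (List.orderedInsert (fun a b => death b ≤ death a) hb.choose
      (List.orderedInsert (fun a b => death b ≤ death a) hb.choose A))
  else if hd : ∃ x, death x = t then
    if hd.choose ∈ A then
      if A.length < 3 then none
      else some A.dropLast.dropLast.dropLast
    else some A
  else some A

/-- The handle list obtained after processing the event points `1, …, t`,
starting from the empty list; `none` in case of failure. -/
noncomputable def runA {n : ℕ} (birth death : Fin n → ℕ) : ℕ → Option (List (Fin n))
  | 0 => some []
  | t + 1 =>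
    match runA birth death t with
    | none => none
    | some A => stepA birth death A (t + 1)

section

variable {n : ℕ} {birth death : Fin n → ℕ}

/-! ### The step function -/

/-- Inserting two copies of a new interval into a sorted handle list puts both copies at the
same place. -/
lemma orderedInsert_twice (x : Fin n) (A : List (Fin n))
    (hA : A.Pairwise (fun a b => death b ≤ death a)) :
    ∃ l₁ l₂, A = l₁ ++ l₂ ∧
      List.orderedInsert (fun a b => death b ≤ death a) x
        (List.orderedInsert (fun a b => death b ≤ death a) x A) = l₁ ++ x :: x :: l₂ ∧
      (∀ a ∈ l₁, death x < death a) ∧ (∀ a ∈ l₂, death a ≤ death x) := by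
  induction A with
  | nil => exact ⟨[], [], by simp⟩
  | cons a A ih =>
    rw [List.pairwise_cons] at hA
    by_cases h : death a ≤ death x
    · refine ⟨[], a :: A, rfl, by simp [List.orderedInsert, h], by simp, ?_⟩
      intro b hb
      rcases List.mem_cons.1 hb with rfl | hb
      · exact h
      · exact (hA.1 b hb).trans h
    · obtain ⟨l₁, l₂, h₁, h₂, h₃, h₄⟩ := ih hA.2
      refine ⟨a :: l₁, l₂, by simp [h₁], by simp [List.orderedInsert, h, h₂], ?_, h₄⟩
      intro b hb
      rcases List.mem_cons.1 hb with rfl | hb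
      · omega
      · exact h₃ b hb

lemma pairwise_insert_twice {x : Fin n} {l₁ l₂ : List (Fin n)}
    (hA : (l₁ ++ l₂).Pairwise (fun a b => death b ≤ death a))
    (h₁ : ∀ a ∈ l₁, death x < death a) (h₂ : ∀ a ∈ l₂, death a ≤ death x) :
    (l₁ ++ x :: x :: l₂).Pairwise (fun a b => death b ≤ death a) := by
  rw [List.pairwise_append] at hA ⊢
  obtain ⟨ha, hb, hc⟩ := hA
  refine ⟨ha, ?_, ?_⟩
  · simp only [List.pairwise_cons, List.mem_cons]
    refine ⟨?_, h₂, hb⟩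
    rintro a (rfl | h)
    · exact le_rfl
    · exact h₂ a h
  · intro a hal b hbl
    simp only [List.mem_cons] at hbl
    rcases hbl with rfl | rfl | h
    · exact (h₁ a hal).le
    · exact (h₁ a hal).le
    · exact hc a hal b h

lemma exists_eq_append_three (A : List (Fin n)) (h : ¬ A.length < 3) :
    ∃ L a b c, A = L ++ [c, b, a] ∧ A.dropLast.dropLast.dropLast = L := by
  rcases hr : A.reverse with _ | ⟨a, _ | ⟨b, _ | ⟨c, R⟩⟩⟩
  · have := congrArg List.length hr; simp at this; simp [this] at h
  · have := congrArg List.length hr; simp at this; omega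
  · have := congrArg List.length hr; simp at this; omega
  · have h2 : A = R.reverse ++ [c, b, a] := by
      have := congrArg List.reverse hr
      simpa using this
    refine ⟨R.reverse, a, b, c, h2, ?_⟩
    have e : R.reverse ++ [c, b, a] = ((R.reverse ++ [c]) ++ [b]) ++ [a] := by simp
    rw [h2, e, List.dropLast_concat, List.dropLast_concat, List.dropLast_concat]

/-- The four possible effects of processing an event point. -/
lemma stepA_cases (hdeathinj : Function.Injective death)
    (A : List (Fin n)) (t : ℕ) :
    (∃ x, birth x = t ∧ stepA birth death A t =
      some (List.orderedInsert (fun a b => death b ≤ death a) x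
        (List.orderedInsert (fun a b => death b ≤ death a) x A))) ∨
    ((∀ x, birth x ≠ t) ∧ (∀ x ∈ A, death x ≠ t) ∧ stepA birth death A t = some A) ∨
    ((∀ x, birth x ≠ t) ∧ (∃ x ∈ A, death x = t) ∧ A.length < 3 ∧ stepA birth death A t = none) ∨
    ((∀ x, birth x ≠ t) ∧ ∃ x ∈ A, death x = t ∧ ∃ L a b c, A = L ++ [c, b, a] ∧
      stepA birth death A t = some L) := by
  unfold stepA
  by_cases hb : ∃ x, birth x = t
  · left
    exact ⟨hb.choose, hb.choose_spec, by rw [dif_pos hb]⟩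
  · right
    have hb' : ∀ x, birth x ≠ t := fun x hx => hb ⟨x, hx⟩
    rw [dif_neg hb]
    by_cases hd : ∃ x, death x = t
    · rw [dif_pos hd]
      have hs := hd.choose_spec
      by_cases hm : hd.choose ∈ A
      · rw [if_pos hm]
        right
        by_cases hl : A.length < 3
        · left
          exact ⟨hb', ⟨_, hm, hs⟩, hl, by rw [if_pos hl]⟩
        · right
          obtain ⟨L, a, b, c, h₁, h₂⟩ := exists_eq_append_three A hl
          exact ⟨hb', _, hm, hs, L, a, b, c, h₁, by rw [if_neg hl, h₂]⟩
      · left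
        refine ⟨hb', ?_, by rw [if_neg hm]⟩
        intro x hx hxt
        exact hm (hdeathinj (hs.trans hxt.symm) ▸ hx)
    · left
      exact ⟨hb', fun x _ hx => hd ⟨x, hx⟩, by rw [dif_neg hd]⟩

/-! ### Success of the procedure yields a partition -/

/-- Two intervals intersect. -/
def Ov (birth death : Fin n → ℕ) (x y : Fin n) : Prop :=
  birth x < death y ∧ birth y < death x

lemma Ov.symm {x y : Fin n} (h : Ov birth death x y) : Ov birth death y x := ⟨h.2, h.1⟩

/-- `Dec B st U`: the handle list `B`, read by increasing end points, consists of one copy of each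
single in the stack `st` (a list of singles with their partners, top first) and of two consecutive
copies of each untouched interval in `U`. -/
inductive Dec : List (Fin n) → List (Fin n × Fin n) → Multiset (Fin n) → Prop
  | nil : Dec [] [] 0
  | single (s p : Fin n) {B st U} : Dec B st U → Dec (s :: B) ((s, p) :: st) U
  | double (x : Fin n) {B st U} : Dec B st U → Dec (x :: x :: B) st (x ::ₘ U)

lemma Dec.mem {B : List (Fin n)} {st U} (h : Dec B st U) {v : Fin n} (hv : v ∈ B) :
    v ∈ (↑(st.map Prod.fst) + U : Multiset (Fin n)) := by
  induction h with
  | nil => simp at hv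
  | single s p _ ih => simp at hv ih ⊢; grind
  | double x _ ih => simp at hv ih ⊢; grind

lemma Dec.mem_of_mem {B : List (Fin n)} {st U} (h : Dec B st U) {e : Fin n × Fin n}
    (he : e ∈ st) : e.1 ∈ B := by
  induction h with
  | nil => simp at he
  | single s p _ ih => grind
  | double x _ ih => grind

/-- A pair of equal handles may be inserted at any place that does not separate two copies of an
interval. -/
lemma Dec.insert {B : List (Fin n)} {st U} (h : Dec B st U) (x : Fin n) (l₁ l₂ : List (Fin n))
    (hB : B = l₁ ++ l₂) (hdis : ∀ a ∈ l₁, a ∉ l₂) : Dec (l₁ ++ x :: x :: l₂) st (x ::ₘ U) := by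
  induction h generalizing l₁ with
  | nil =>
    simp at hB
    obtain ⟨rfl, rfl⟩ := hB
    exact Dec.double x Dec.nil
  | @single s p B st U hd ih =>
    rcases l₁ with _ | ⟨a, l₁⟩
    · simp at hB; subst hB
      exact Dec.double x (Dec.single s p hd)
    · simp at hB
      obtain ⟨rfl, rfl⟩ := hB
      exact Dec.single s p (ih l₁ rfl (fun a ha => hdis a (by simp [ha])))
  | @double y B st U hd ih =>
    rcases l₁ with _ | ⟨a, _ | ⟨b, l₁⟩⟩
    · simp at hB; subst hB
      exact Dec.double x (Dec.double y hd)
    · simp at hB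
      obtain ⟨rfl, rfl⟩ := hB
      exact absurd (by simp) (hdis y (by simp))
    · simp at hB
      obtain ⟨rfl, rfl, rfl⟩ := hB
      rw [Multiset.cons_swap]
      exact Dec.double y (ih l₁ rfl (fun a ha => hdis a (by simp [ha])))

/-- The vertices of a triple. -/
def triple (e : Fin n × Fin n × Fin n) : Multiset (Fin n) := {e.1, e.2.1, e.2.2}

/-- The partial partition at time `t`: the intervals born up to `t` are the singles in the stack
`st`, their partners, the untouched intervals `U`, and the paths in `T`; each partner meets its
single and the single below that one. -/
structure Partial (birth death : Fin n → ℕ) (t : ℕ) (st : List (Fin n × Fin n))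
    (U : Multiset (Fin n)) (T : Multiset (Fin n × Fin n × Fin n)) : Prop where
  own : ∀ e ∈ st, Ov birth death e.2 e.1
  below : st.IsChain (fun a b => Ov birth death a.2 b.1)
  paths : ∀ e ∈ T, Ov birth death e.1 e.2.1 ∧ Ov birth death e.2.1 e.2.2
  all : (Finset.univ.filter (fun v => birth v ≤ t)).val =
    ↑(st.map Prod.fst) + ↑(st.map Prod.snd) + U + (T.map triple).sum

/-- The invariant of a run of the procedure that has not failed up to time `t`. -/
structure RunInv (birth death : Fin n → ℕ) (t : ℕ) (A : List (Fin n)) : Prop where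
  sorted : A.Pairwise (fun a b => death b ≤ death a)
  alive : ∀ a ∈ A, birth a ≤ t ∧ t < death a
  dec : ∃ st U T, Dec A.reverse st U ∧ Partial birth death t st U T

/-- An interval that is a partner or on a finished path has no handle left. -/
lemma Partial.notMem {t st U T} (h : Partial birth death t st U T) {B : List (Fin n)}
    (hd : Dec B st U) {x : Fin n}
    (hx : x ∈ (↑(st.map Prod.snd) + (T.map triple).sum : Multiset (Fin n))) : x ∉ B := by
  intro hB
  have h₁ := hd.mem hB
  have hn := (Finset.univ.filter (fun v => birth v ≤ t)).nodup
  have e : (Finset.univ.filter (fun v => birth v ≤ t)).val =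
      (↑(st.map Prod.fst) + U) + (↑(st.map Prod.snd) + (T.map triple).sum) := by
    rw [h.all]; abel
  rw [e, Multiset.nodup_add] at hn
  exact Multiset.disjoint_left.1 hn.2.2 h₁ hx

/-- The combinatorial core: when all intervals with handles intersect pairwise, removing the three
earliest handles transforms a partial partition into another one. The interval `a` with the
earliest end point ends up without handles. -/
lemma remove_core {t : ℕ} {R : List (Fin n)} {a b c : Fin n} {st U T}
    (hd : Dec (a :: b :: c :: R) st U) (hp : Partial birth death t st U T)
    (hov : ∀ x ∈ a :: b :: c :: R, ∀ y ∈ a :: b :: c :: R, Ov birth death x y) :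
    ∃ st' U' T', Dec R st' U' ∧ Partial birth death t st' U' T' ∧
      a ∈ (↑(st'.map Prod.snd) + (T'.map triple).sum : Multiset (Fin n)) := by
  obtain ⟨own, below, paths, all⟩ := hp
  cases hd with
  | double _ hd =>
    cases hd with
    | @single _ p _ st _ hd =>
      -- one single `c` with partner `p`, and an untouched interval `a`
      refine ⟨st, _, (p, c, a) ::ₘ T, hd, ⟨?_, ?_, ?_, ?_⟩, ?_⟩
      · exact fun e he => own e (by simp [he])
      · exact below.tail
      · intro e he
        rcases Multiset.mem_cons.1 he with rfl | he
        · exact ⟨own (c, p) (by simp), hov _ (by simp) _ (by simp)⟩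
        · exact paths e he
      · rw [all]
        simp [-Multiset.coe_add, triple, ← Multiset.singleton_add, ← Multiset.cons_coe]
        abel
      · simp [triple]
    | @double _ R st U hd =>
      -- two untouched intervals: `c` is pushed with partner `a`
      refine ⟨(c, a) :: st, _, T, Dec.single c a hd, ⟨?_, ?_, paths, ?_⟩, ?_⟩
      · intro e he
        rcases List.mem_cons.1 he with rfl | he
        · exact hov _ (by simp) _ (by simp)
        · exact own e he
      · rw [List.isChain_cons]
        refine ⟨?_, below⟩
        intro y hy
        have := hd.mem_of_mem (List.mem_of_mem_head? hy)
        exact hov _ (by simp) _ (by simp [this])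
      · rw [all]
        simp [-Multiset.coe_add, ← Multiset.singleton_add, ← Multiset.cons_coe]
        abel
      · simp
  | @single _ p _ st _ hd =>
    cases hd with
    | @double _ _ _ U hd =>
      -- one single `a` with partner `p`, and an untouched interval `b`
      refine ⟨st, U, (p, a, b) ::ₘ T, hd, ⟨?_, ?_, ?_, ?_⟩, ?_⟩
      · exact fun e he => own e (by simp [he])
      · exact below.tail
      · intro e he
        rcases Multiset.mem_cons.1 he with rfl | he
        · exact ⟨own (a, p) (by simp), hov _ (by simp) _ (by simp)⟩
        · exact paths e he
      · rw [all]
        simp [-Multiset.coe_add, triple, ← Multiset.singleton_add, ← Multiset.cons_coe]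
        abel
      · simp [triple]
    | @single _ q _ st _ hd =>
      have hab : Ov birth death p b := by
        rw [List.isChain_cons_cons] at below
        exact below.1
      have hqb : Ov birth death q b := own (b, q) (by simp)
      cases hd with
      | @single _ r _ st _ hd =>
        -- three singles
        refine ⟨st, U, (q, b, p) ::ₘ (r, c, a) ::ₘ T, hd, ⟨?_, ?_, ?_, ?_⟩, ?_⟩
        · exact fun e he => own e (by simp [he])
        · exact below.tail.tail.tail
        · intro e he
          rcases Multiset.mem_cons.1 he with rfl | he
          · exact ⟨hqb, hab.symm⟩
          rcases Multiset.mem_cons.1 he with rfl | he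
          · exact ⟨own (c, r) (by simp), hov _ (by simp) _ (by simp)⟩
          · exact paths e he
        · rw [all]
          simp [-Multiset.coe_add, triple, ← Multiset.singleton_add, ← Multiset.cons_coe]
          abel
        · simp [triple]
      | @double _ R _ U hd =>
        -- two singles are popped, and `c` is pushed with partner `a`
        refine ⟨(c, a) :: st, U, (q, b, p) ::ₘ T, Dec.single c a hd, ⟨?_, ?_, ?_, ?_⟩, ?_⟩
        · intro e he
          rcases List.mem_cons.1 he with rfl | he
          · exact hov _ (by simp) _ (by simp)
          · exact own e (by simp [he])
        · rw [List.isChain_cons]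
          refine ⟨?_, below.tail.tail⟩
          intro y hy
          have := hd.mem_of_mem (List.mem_of_mem_head? hy)
          exact hov _ (by simp) _ (by simp [this])
        · intro e he
          rcases Multiset.mem_cons.1 he with rfl | he
          · exact ⟨hqb, hab.symm⟩
          · exact paths e he
        · rw [all]
          simp [-Multiset.coe_add, triple, ← Multiset.singleton_add, ← Multiset.cons_coe]
          abel
        · simp

lemma Partial.succ {t st U T} (h : Partial birth death t st U T) (hb : ∀ x, birth x ≠ t + 1) :
    Partial birth death (t + 1) st U T := by
  refine ⟨h.own, h.below, h.paths, ?_⟩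
  rw [← h.all]
  congr 2
  ext v
  have := hb v
  omega

lemma RunInv.insert {t : ℕ} {A : List (Fin n)} (h : RunInv birth death t A)
    (horder : ∀ x, birth x < death x) (hbirthinj : Function.Injective birth)
    (hbd : ∀ x y, birth x ≠ death y) (x : Fin n) (hx : birth x = t + 1) :
    RunInv birth death (t + 1) (List.orderedInsert (fun a b => death b ≤ death a) x
        (List.orderedInsert (fun a b => death b ≤ death a) x A)) := by
  obtain ⟨l₁, l₂, rfl, h₂, h₃, h₄⟩ := orderedInsert_twice x A h.sorted
  rw [h₂]
  obtain ⟨st, U, T, hd, hp⟩ := h.dec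
  refine ⟨pairwise_insert_twice h.sorted h₃ h₄, ?_, st, x ::ₘ U, T, ?_, hp.own, hp.below,
    hp.paths, ?_⟩
  · intro a ha
    have h₅ : a = x ∨ a ∈ l₁ ++ l₂ := by simp at ha ⊢; tauto
    rcases h₅ with rfl | h₅
    · exact ⟨hx.le, hx ▸ horder a⟩
    · have := h.alive a h₅
      have := hbd x a
      omega
  · have := hd.insert x l₂.reverse l₁.reverse (by simp) (by
      intro a ha hb
      have := h₃ a (by simpa using hb)
      have := h₄ a (by simpa using ha)
      omega)
    simpa using this
  · have e : Finset.univ.filter (fun v => birth v ≤ t + 1) =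
        Finset.cons x (Finset.univ.filter (fun v => birth v ≤ t)) (by simp [hx]) := by
      ext v
      simp only [Finset.mem_filter, Finset.mem_univ, true_and, Finset.mem_cons]
      constructor
      · intro hv
        by_cases hv' : birth v = t + 1
        · exact Or.inl (hbirthinj (hv'.trans hx.symm))
        · exact Or.inr (by omega)
      · rintro (rfl | hv) <;> omega
    rw [e, Finset.cons_val, hp.all]
    simp only [← Multiset.singleton_add]
    abel

lemma RunInv.remove {t : ℕ} {L : List (Fin n)} {a b c : Fin n} (h : RunInv birth death t (L ++ [c, b, a]))
    (hdeathinj : Function.Injective death) (hb : ∀ x, birth x ≠ t + 1)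
    {x : Fin n} (hxA : x ∈ L ++ [c, b, a]) (hx : death x = t + 1) :
    RunInv birth death (t + 1) L := by
  obtain ⟨st, U, T, hd, hp⟩ := h.dec
  have hs := List.pairwise_append.1 h.sorted
  have hxa : x = a := by
    apply hdeathinj
    have h₁ := (h.alive a (by simp)).2
    have h₂ : death a ≤ death x := by
      have hs' : ((L ++ [c, b]) ++ [a]).Pairwise (fun a b => death b ≤ death a) := by
        simpa using h.sorted
      have hxA' : x ∈ L ++ [c, b] ∨ x = a := by simp at hxA ⊢; tauto
      rcases hxA' with h' | rfl
      · exact (List.pairwise_append.1 hs').2.2 x h' a (by simp)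
      · exact le_rfl
    omega
  subst hxa
  obtain ⟨st', U', T', hd', hp', hm⟩ := remove_core (R := L.reverse) (a := x) (b := b) (c := c)
    (by simpa using hd) hp (by
      intro u hu v hv
      have h₁ := h.alive u (by simp at hu ⊢; tauto)
      have h₂ := h.alive v (by simp at hv ⊢; tauto)
      exact ⟨by omega, by omega⟩)
  refine ⟨hs.1, ?_, st', U', T', hd', hp'.succ hb⟩
  intro u hu
  have h₁ := h.alive u (by simp [hu])
  refine ⟨by omega, ?_⟩
  have h₂ : death u ≠ t + 1 := by
    intro h₃
    obtain rfl : u = x := hdeathinj (h₃.trans hx.symm)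
    exact hp'.notMem hd' hm (by simpa using hu)
  omega

lemma inv_of_run (horder : ∀ x, birth x < death x) (hlow : ∀ x, 1 ≤ birth x)
    (hbirthinj : Function.Injective birth) (hdeathinj : Function.Injective death)
    (hbd : ∀ x y, birth x ≠ death y) (t : ℕ) :
    ∀ A, runA birth death t = some A → RunInv birth death t A := by
  induction t with
  | zero =>
    intro A hA
    simp only [runA, Option.some.injEq] at hA
    subst hA
    refine ⟨by simp, by simp, [], 0, 0, Dec.nil, by simp, by simp, by simp, ?_⟩
    have : Finset.univ.filter (fun v => birth v ≤ 0) = ∅ := by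
      ext v
      have := hlow v
      simp; omega
    rw [this]; simp
  | succ t ih =>
    intro A' hA'
    simp only [runA] at hA'
    rcases hr : runA birth death t with _ | A
    · simp [hr] at hA'
    · have hI := ih A hr
      simp only [hr] at hA'
      rcases stepA_cases hdeathinj A (t + 1) with
        ⟨x, hx, hs⟩ | ⟨hb, hd, hs⟩ | ⟨_, _, _, hs⟩ | ⟨hb, x, hxA, hx, L, a, b, c, rfl, hs⟩
      · rw [hs, Option.some.injEq] at hA'
        subst hA'
        exact hI.insert horder hbirthinj hbd x hx
      · rw [hs, Option.some.injEq] at hA'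
        subst hA'
        obtain ⟨st, U, T, h₁, h₂⟩ := hI.dec
        refine ⟨hI.sorted, ?_, st, U, T, h₁, h₂.succ hb⟩
        intro a ha
        have := hI.alive a ha
        have := hd a ha
        omega
      · simp [hs] at hA'
      · rw [hs, Option.some.injEq] at hA'
        subst hA'
        exact hI.remove hdeathinj hb hxA hx

/-- A multiset of paths using every vertex exactly once is a `P₃`-partition. -/
lemma partition_of_triples (T : Multiset (Fin n × Fin n × Fin n))
    (hT : ∀ e ∈ T, Ov birth death e.1 e.2.1 ∧ Ov birth death e.2.1 e.2.2)
    (hall : (Finset.univ : Finset (Fin n)).val = (T.map triple).sum) :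
    ∃ P, IsP3Partition (intervalGraph birth death) P := by
  have hnd : (T.map triple).sum.Nodup := hall ▸ Finset.univ.nodup
  have hdis : ∀ e ∈ T, (triple e).Nodup := by
    intro e he
    obtain ⟨T', rfl⟩ := Multiset.exists_cons_of_mem he
    simp only [Multiset.map_cons, Multiset.sum_cons, Multiset.nodup_add] at hnd
    exact hnd.1
  have huniq : ∀ e ∈ T, ∀ f ∈ T, ∀ v, v ∈ triple e → v ∈ triple f → e = f := by
    intro e he f hf v hve hvf
    by_contra hne
    obtain ⟨T', rfl⟩ := Multiset.exists_cons_of_mem he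
    have hf' : f ∈ T' := by
      rcases Multiset.mem_cons.1 hf with h | h
      · exact absurd h.symm hne
      · exact h
    obtain ⟨T'', rfl⟩ := Multiset.exists_cons_of_mem hf'
    simp only [Multiset.map_cons, Multiset.sum_cons, Multiset.nodup_add] at hnd
    exact Multiset.disjoint_left.1 hnd.2.2 hve (by simp [hvf])
  refine ⟨(T.map (fun e => (triple e).toFinset)).toFinset, ?_, ?_⟩
  · intro X hX
    simp only [Multiset.mem_toFinset, Multiset.mem_map] at hX
    obtain ⟨⟨a, b, c⟩, he, rfl⟩ := hX
    have hn := hdis _ he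
    refine ⟨?_, a, by simp [triple], b, by simp [triple], c, by simp [triple], ?_⟩
    · rw [Multiset.toFinset_card_of_nodup hn]; simp [triple]
    · have := hT _ he
      simp [triple] at hn
      obtain ⟨⟨h₁, h₂⟩, h₃⟩ := hn
      refine ⟨h₁, h₂, h₃, ?_, ?_⟩
      · rw [intervalGraph, SimpleGraph.fromRel_adj]
        exact ⟨h₁, Or.inl this.1⟩
      · rw [intervalGraph, SimpleGraph.fromRel_adj]
        exact ⟨h₃, Or.inl this.2⟩
  · intro v
    have hv : v ∈ (T.map triple).sum := by rw [← hall]; simp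
    rw [← Multiset.join, Multiset.mem_join] at hv
    obtain ⟨m, hm, hvm⟩ := hv
    obtain ⟨e, he, rfl⟩ := Multiset.mem_map.1 hm
    refine ⟨(triple e).toFinset, ⟨?_, by simpa using hvm⟩, ?_⟩
    · rw [Multiset.mem_toFinset]
      exact Multiset.mem_map_of_mem _ he
    · rintro Y ⟨hY, hvY⟩
      rw [Multiset.mem_toFinset, Multiset.mem_map] at hY
      obtain ⟨f, hf, rfl⟩ := hY
      rw [huniq e he f hf v hvm (by simpa using hvY)]

/-! ### A partition yields success of the procedure -/

/-- The members of a `P₃` named by their roles in the strategy read off from a partition: `x` dies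
first, `w` meets `x`, and `o` meets `w`. -/
structure Roles (birth death : Fin n → ℕ) (X : Finset (Fin n)) (x w o : Fin n) : Prop where
  mem : ∀ v, v ∈ X ↔ v = x ∨ v = w ∨ v = o
  ne : w ≠ o
  xw : death x < death w
  xo : death x < death o
  wx : birth w < death x
  ow : birth o < death w

lemma exists_roles (hdeathinj : Function.Injective death) (X : Finset (Fin n)) (hc : X.card = 3)
    (h : ∃ a ∈ X, ∃ b ∈ X, ∃ c ∈ X, a ≠ b ∧ a ≠ c ∧ b ≠ c ∧
      (intervalGraph birth death).Adj a b ∧ (intervalGraph birth death).Adj b c) :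
    ∃ x w o, Roles birth death X x w o := by
  obtain ⟨a, ha, b, hb, c, hc', hab, hac, hbc, h₁, h₂⟩ := h
  have hX : ∀ v, v ∈ X ↔ v = a ∨ v = b ∨ v = c := by
    have : ({a, b, c} : Finset (Fin n)) = X := by
      apply Finset.eq_of_subset_of_card_le
      · intro v hv; simp at hv; rcases hv with rfl | rfl | rfl <;> assumption
      · rw [hc, Finset.card_eq_three.2 ⟨a, b, c, hab, hac, hbc, rfl⟩]
    intro v; rw [← this]; simp
  rw [intervalGraph, SimpleGraph.fromRel_adj] at h₁ h₂
  have dab := hdeathinj.ne hab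
  have dac := hdeathinj.ne hac
  have dbc := hdeathinj.ne hbc
  by_cases e₁ : death a < death b ∧ death a < death c
  · exact ⟨a, b, c, hX, hbc, by omega, by omega, by omega, by omega⟩
  by_cases e₂ : death c < death b ∧ death c < death a
  · exact ⟨c, b, a, fun v => by rw [hX]; tauto, hab.symm, by omega, by omega, by omega, by omega⟩
  -- The centre `b` dies first, so all three intervals meet at that time.
  · exact ⟨b, a, c, fun v => by rw [hX]; tauto, hac, by omega, by omega, by omega, by omega⟩

/-- The number of handles of `u` with end point at least `s` inserted up to time `t`. -/
def full (birth death : Fin n → ℕ) (u : Fin n) (t s : ℕ) : ℕ :=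
  if birth u ≤ t ∧ s ≤ death u then 2 else 0

lemma full_born (u : Fin n) (t s : ℕ) (h : birth u ≤ t) :
    full birth death u t s = if s ≤ death u then 2 else 0 := by
  simp [full, h]

lemma full_le (u : Fin n) (t s : ℕ) : full birth death u t s ≤ full birth death u t 0 := by
  unfold full
  split_ifs <;> omega

lemma full_alive (u : Fin n) (t s : ℕ) (h : s ≤ death u) :
    full birth death u t s = full birth death u t 0 := by
  simp [full, h]

lemma full_succ_of_ne (u : Fin n) (t s : ℕ) (h : birth u ≠ t + 1) :
    full birth death u (t + 1) s = full birth death u t s := by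
  have : birth u ≤ t + 1 ↔ birth u ≤ t := by omega
  simp [full, this]

lemma full_succ_of_eq (u : Fin n) (t s : ℕ) (h : birth u = t + 1) :
    full birth death u (t + 1) s = full birth death u t s + (if s ≤ death u then 2 else 0) := by
  simp [full, h]

/-- The number of handles with end point at least `s` that the strategy keeps at time `t` for a
triple with roles `x, w, o`: two per born interval before `x` dies, then one of `w` and two of `o`
(if born), and none once `w` or `o` has died. -/
def load (birth death : Fin n → ℕ) (x w o : Fin n) (t s : ℕ) : ℕ :=
  if t < death x then
    full birth death x t s + full birth death w t s + full birth death o t s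
  else if t < death w ∧ t < death o then
    (if s ≤ death w then 1 else 0) + full birth death o t s
  else 0

lemma load_le (x w o : Fin n) (t s : ℕ) :
    load birth death x w o t s ≤ load birth death x w o t 0 := by
  have h₁ := full_le (birth := birth) (death := death) x t s
  have h₂ := full_le (birth := birth) (death := death) w t s
  have h₃ := full_le (birth := birth) (death := death) o t s
  unfold load
  split_ifs <;> omega

/-- All handles that the strategy keeps belong to intervals that are still alive. -/
lemma load_alive {X : Finset (Fin n)} {x w o : Fin n} (h : Roles birth death X x w o)
    (t s : ℕ) (hs : s ≤ t + 1) :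
    load birth death x w o t s = load birth death x w o t 0 := by
  have xw := h.xw
  have xo := h.xo
  unfold load
  split_ifs with h₁ h₂ h₃
  · rw [full_alive x t s (by omega), full_alive w t s (by omega), full_alive o t s (by omega)]
  · rw [full_alive o t s (by omega)]
  · omega
  · omega
  · omega
  · rfl

lemma load_birth (horder : ∀ x, birth x < death x) (hbirthinj : Function.Injective birth)
    (hbd : ∀ x y, birth x ≠ death y) {X : Finset (Fin n)} {x w o : Fin n}
    (h : Roles birth death X x w o) (t s : ℕ) (v : Fin n) (hb : birth v = t + 1) :
    load birth death x w o (t + 1) s =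
      load birth death x w o t s + (if v ∈ X then (if s ≤ death v then 2 else 0) else 0) := by
  have d₁ := hbd v x
  have d₂ := hbd v w
  have d₃ := hbd v o
  have i₁ : x ≠ w := fun e => by have := h.xw; simp [e] at this
  have i₂ : x ≠ o := fun e => by have := h.xo; simp [e] at this
  have b₁ := horder x
  have b₃ := horder o
  have b₄ := hbirthinj.ne i₁
  have b₅ := hbirthinj.ne i₂
  have b₆ := hbirthinj.ne h.ne
  obtain ⟨hm, ne, xw, xo, wx, ow⟩ := h
  -- As `t + 1` is not an end point, the strategy is in the same phase at `t` and `t + 1`.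
  have e₁ : t + 1 < death x ↔ t < death x := by omega
  have e₂ : t + 1 < death w ↔ t < death w := by omega
  have e₃ : t + 1 < death o ↔ t < death o := by omega
  unfold load
  simp only [e₁, e₂, e₃]
  by_cases hv : v ∈ X
  · rw [if_pos hv]
    rcases (hm v).1 hv with rfl | rfl | rfl
    · rw [full_succ_of_eq v t s hb, full_succ_of_ne w t s (by omega),
        full_succ_of_ne o t s (by omega)]
      have e₄ : t < death v := by omega
      simp only [if_pos e₄]
      omega
    · rw [full_succ_of_eq v t s hb, full_succ_of_ne x t s (by omega),
        full_succ_of_ne o t s (by omega)]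
      have e₄ : t < death x := by omega
      simp only [if_pos e₄]
      omega
    · rw [full_succ_of_eq v t s hb, full_succ_of_ne x t s (by omega),
        full_succ_of_ne w t s (by omega)]
      have e₄ : t < death w ∧ t < death v := by omega
      simp only [e₄]
      by_cases e₅ : t < death x <;> simp [e₅] <;> omega
  · rw [if_neg hv]
    have n₁ : birth v ≠ birth x := hbirthinj.ne fun e => hv (by rw [hm]; tauto)
    have n₂ : birth v ≠ birth w := hbirthinj.ne fun e => hv (by rw [hm]; tauto)
    have n₃ : birth v ≠ birth o := hbirthinj.ne fun e => hv (by rw [hm]; tauto)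
    rw [full_succ_of_ne x t s (by omega), full_succ_of_ne w t s (by omega),
      full_succ_of_ne o t s (by omega), Nat.add_zero]

/-- At an event point without a birth the strategy removes a multiple of three handles. -/
lemma load_noBirth (horder : ∀ x, birth x < death x) {X : Finset (Fin n)} {x w o : Fin n}
    (h : Roles birth death X x w o) (t : ℕ) (hb : ∀ v, birth v ≠ t + 1) :
    (∀ s, load birth death x w o (t + 1) s ≤ load birth death x w o t s) ∧
    ∃ k, load birth death x w o t 0 = load birth death x w o (t + 1) 0 + 3 * k ∧
      (k = 0 → ∀ s, load birth death x w o (t + 1) s = load birth death x w o t s) := by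
  have b₁ := horder x
  have b₃ := horder o
  obtain ⟨hm, ne, xw, xo, wx, ow⟩ := h
  have hf : ∀ u s, full birth death u (t + 1) s = full birth death u t s :=
    fun u s => full_succ_of_ne u t s (hb u)
  simp only [load, hf]
  by_cases e₁ : t + 1 = death x
  · -- `x, x, w` are removed
    have a₁ : t < death x := by omega
    have a₂ : ¬ t + 1 < death x := by omega
    have a₃ : t + 1 < death w ∧ t + 1 < death o := by omega
    simp only [if_pos a₁, if_neg a₂, if_pos a₃, full_born x t _ (by omega : birth x ≤ t),
      full_born w t _ (by omega : birth w ≤ t)]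
    refine ⟨fun s => ?_, 1, by simp; omega, by simp⟩
    split_ifs <;> omega
  · have e₂ : t + 1 < death x ↔ t < death x := by omega
    simp only [e₂]
    by_cases e₃ : death x ≤ t ∧ t < death w ∧ t < death o ∧ (t + 1 = death w ∨ t + 1 = death o)
    · -- `w, o, o` are removed
      have a₁ : ¬ t < death x := by omega
      have a₂ : ¬ (t + 1 < death w ∧ t + 1 < death o) := by omega
      have a₃ : t < death w ∧ t < death o := by omega
      simp only [if_neg a₁, if_neg a₂, if_pos a₃, full_born o t _ (by omega : birth o ≤ t)]
      exact ⟨fun s => Nat.zero_le _, 1, by simp, by simp⟩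
    · have e₄ : ∀ p q r : ℕ, (if t < death x then p else
          if t + 1 < death w ∧ t + 1 < death o then q else r) =
          (if t < death x then p else if t < death w ∧ t < death o then q else r) := by
        intro p q r
        by_cases a₁ : t < death x
        · simp only [if_pos a₁]
        · have a₂ : (t + 1 < death w ∧ t + 1 < death o) ↔ (t < death w ∧ t < death o) := by omega
          simp only [a₂]
      simp only [e₄]
      exact ⟨fun s => le_rfl, 0, by simp, by simp⟩

/-- The properties of the strategy read off from a partition that the comparison with the greedy
list needs; `F t s` is the number of handles with end point at least `s` kept at time `t`. -/
structure Strategy (birth death : Fin n → ℕ) (F : ℕ → ℕ → ℕ) : Prop where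
  zero : ∀ s, F 0 s = 0
  le : ∀ t s, F t s ≤ F t 0
  alive : ∀ t s, s ≤ t + 1 → F t s = F t 0
  born : ∀ t s v, birth v = t + 1 → F (t + 1) s = F t s + (if s ≤ death v then 2 else 0)
  noBirth : ∀ t, (∀ v, birth v ≠ t + 1) → (∀ s, F (t + 1) s ≤ F t s) ∧
    ∃ k, F t 0 = F (t + 1) 0 + 3 * k ∧ (k = 0 → ∀ s, F (t + 1) s = F t s)

lemma exists_strategy (horder : ∀ x, birth x < death x) (hlow : ∀ x, 1 ≤ birth x)
    (hbirthinj : Function.Injective birth) (hdeathinj : Function.Injective death)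
    (hbd : ∀ x y, birth x ≠ death y) (P : Finset (Finset (Fin n)))
    (hP : IsP3Partition (intervalGraph birth death) P) : ∃ F, Strategy birth death F := by
  rcases isEmpty_or_nonempty (Fin n) with he | ⟨⟨v⟩⟩
  · exact ⟨fun _ _ => 0, fun _ => rfl, fun _ _ => le_rfl, fun _ _ _ => rfl,
      fun _ _ v => he.elim v, fun _ _ => ⟨fun _ => le_rfl, 0, rfl, fun _ _ => rfl⟩⟩
  have hr : ∀ X : Finset (Fin n), ∃ x w o, X ∈ P → Roles birth death X x w o := by
    intro X
    by_cases hX : X ∈ P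
    · obtain ⟨x, w, o, h⟩ := exists_roles hdeathinj X (hP.1 X hX).1 (hP.1 X hX).2
      exact ⟨x, w, o, fun _ => h⟩
    · exact ⟨v, v, v, fun h => absurd h hX⟩
  choose x w o hr using hr
  refine ⟨fun t s => ∑ X ∈ P, load birth death (x X) (w X) (o X) t s, ?_, ?_, ?_, ?_, ?_⟩
  · intro s
    apply Finset.sum_eq_zero
    intro X hX
    have h₁ := hlow (x X)
    have h₂ := hlow (w X)
    have h₃ := hlow (o X)
    have h₄ := horder (x X)
    rw [load, if_pos (by omega)]
    simp only [full]
    rw [if_neg (by omega), if_neg (by omega), if_neg (by omega), Nat.add_zero]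
  · exact fun t s => Finset.sum_le_sum fun X _ => load_le _ _ _ t s
  · exact fun t s hs => Finset.sum_congr rfl fun X hX => load_alive (hr X hX) t s hs
  · intro t s v hv
    obtain ⟨X₀, ⟨h₁, h₂⟩, h₃⟩ := hP.2 v
    rw [Finset.sum_congr rfl fun X hX =>
      load_birth horder hbirthinj hbd (hr X hX) t s v hv, Finset.sum_add_distrib]
    congr 1
    rw [Finset.sum_eq_single X₀, if_pos h₂]
    · intro X hX hne
      rw [if_neg fun hvX => hne (h₃ X ⟨hX, hvX⟩)]
    · exact fun h => absurd h₁ h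
  · intro t hb
    have hd := fun X hX => load_noBirth horder (hr X hX) t hb
    refine ⟨fun s => Finset.sum_le_sum fun X hX => (hd X hX).1 s, ?_⟩
    have hk : ∀ X, ∃ k, X ∈ P → load birth death (x X) (w X) (o X) t 0 =
        load birth death (x X) (w X) (o X) (t + 1) 0 + 3 * k ∧ (k = 0 → ∀ s,
        load birth death (x X) (w X) (o X) (t + 1) s = load birth death (x X) (w X) (o X) t s) := by
      intro X
      by_cases hX : X ∈ P
      · obtain ⟨k, hk⟩ := (hd X hX).2
        exact ⟨k, fun _ => hk⟩
      · exact ⟨0, fun h => absurd h hX⟩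
    choose k hk using hk
    refine ⟨∑ X ∈ P, k X, ?_, ?_⟩
    · rw [Finset.sum_congr rfl fun X hX => (hk X hX).1, Finset.sum_add_distrib, Finset.mul_sum]
    · intro h₀ s
      rw [Finset.sum_eq_zero_iff] at h₀
      exact Finset.sum_congr rfl fun X hX => (hk X hX).2 (h₀ X hX) s

/-- The handle list `A` of the procedure dominates the strategy `F` at time `t`. -/
structure Dom (death : Fin n → ℕ) (F : ℕ → ℕ → ℕ) (t : ℕ) (A : List (Fin n)) : Prop where
  sorted : A.Pairwise (fun a b => death b ≤ death a)
  le : ∀ s, F t s ≤ A.countP (fun a => decide (s ≤ death a))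
  mod : A.length % 3 = F t 0 % 3

/-- When a member of the greedy list dies, the list can afford to lose three handles. -/
lemma Dom.enough {F : ℕ → ℕ → ℕ} (hF : Strategy birth death F) {t : ℕ} {A : List (Fin n)}
    (h : Dom death F t A) (hb : ∀ v, birth v ≠ t + 1) {x : Fin n} (hxA : x ∈ A)
    (hx : death x = t + 1) :
    F (t + 1) 0 + 3 ≤ A.length := by
  obtain ⟨h₁, k, h₂, h₃⟩ := hF.noBirth t hb
  have h₄ := h.le 0
  have h₅ : A.countP (fun a => decide (0 ≤ death a)) ≤ A.length := List.countP_le_length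
  rcases Nat.eq_zero_or_pos k with hk | hk
  · -- The strategy removes nothing, so all its handles die after `t + 1 = death x`.
    have h₆ := hF.alive (t + 1) (t + 2) le_rfl
    have h₇ := h₃ hk (t + 2)
    have h₈ := h.le (t + 2)
    have h₉ : A.countP (fun a => decide (t + 2 ≤ death a)) < A.length := by
      refine lt_of_le_of_ne List.countP_le_length fun e => ?_
      have := List.countP_eq_length.1 e x hxA
      simp at this
      omega
    have := h.mod
    omega
  · omega

lemma countP_initial {L : List (Fin n)} {a b c : Fin n}
    (hs : (L ++ [c, b, a]).Pairwise (fun a b => death b ≤ death a)) (s : ℕ) :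
    L.countP (fun a => decide (s ≤ death a)) = L.length ∨
    L.countP (fun a => decide (s ≤ death a)) =
      (L ++ [c, b, a]).countP (fun a => decide (s ≤ death a)) := by
  rw [List.pairwise_append] at hs
  by_cases h : s ≤ death c ∨ s ≤ death b ∨ s ≤ death a
  · left
    rw [List.countP_eq_length]
    intro y hy
    have h₁ := hs.2.2 y hy a (by simp)
    have h₂ := hs.2.2 y hy b (by simp)
    have h₃ := hs.2.2 y hy c (by simp)
    simp
    omega
  · right
    push Not at h
    simp [List.countP_append, List.countP_cons]
    omega

lemma run_of_strategy (hdeathinj : Function.Injective death)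
    {F : ℕ → ℕ → ℕ} (hF : Strategy birth death F) (t : ℕ) :
    ∃ A, runA birth death t = some A ∧ Dom death F t A := by
  induction t with
  | zero => exact ⟨[], rfl, by simp, by simp [hF.zero], by simp [hF.zero]⟩
  | succ t ih =>
    obtain ⟨A, hr, hD⟩ := ih
    simp only [runA, hr]
    rcases stepA_cases hdeathinj A (t + 1) with
      ⟨x, hx, hs⟩ | ⟨hb, hd, hs⟩ | ⟨hb, ⟨x, hxA, hx⟩, hl, hs⟩ |
      ⟨hb, x, hxA, hx, L, a, b, c, rfl, hs⟩
    · refine ⟨_, hs, ?_⟩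
      obtain ⟨l₁, l₂, rfl, h₂, h₃, h₄⟩ := orderedInsert_twice x A hD.sorted
      rw [h₂]
      refine ⟨pairwise_insert_twice hD.sorted h₃ h₄, ?_, ?_⟩
      · intro s
        have := hD.le s
        rw [hF.born t s x hx]
        simp only [List.countP_append, List.countP_cons] at this ⊢
        by_cases h : s ≤ death x <;> simp [h] <;> omega
      · have := hD.mod
        rw [hF.born t 0 x hx]
        simp at this ⊢
        omega
    · obtain ⟨h₁, k, h₂, _⟩ := hF.noBirth t hb
      refine ⟨A, hs, hD.sorted, fun s => (h₁ s).trans (hD.le s), ?_⟩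
      have := hD.mod
      omega
    · have := hD.enough hF hb hxA hx
      omega
    · refine ⟨L, hs, (List.pairwise_append.1 hD.sorted).1, ?_, ?_⟩
      · intro s
        have h₁ := hD.enough hF hb hxA hx
        have h₂ := hF.le (t + 1) s
        have h₃ := (hF.noBirth t hb).1 s
        have h₄ := hD.le s
        simp at h₁
        rcases countP_initial hD.sorted s with h | h <;> omega
      · obtain ⟨_, k, h₂, _⟩ := hF.noBirth t hb
        have := hD.mod
        simp at this
        omega

end

/-- The handle-list procedure processes all `2n` event points of an interval
representation (with pairwise distinct endpoints in `{1, …, 2n}`) without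
failing if and only if the interval graph admits a `P₃`-partition. -/
theorem stmt14 (n : ℕ) (birth death : Fin n → ℕ)
    (horder : ∀ x, birth x < death x)
    (hlow : ∀ x, 1 ≤ birth x) (hhigh : ∀ x, death x ≤ 2 * n)
    (hbirthinj : Function.Injective birth)
    (hdeathinj : Function.Injective death)
    (hbd : ∀ x y, birth x ≠ death y) :
    (runA birth death (2 * n)).isSome = true ↔
      ∃ P, IsP3Partition (intervalGraph birth death) P := by
  constructor
  · intro h
    obtain ⟨A, hA⟩ := Option.isSome_iff_exists.1 h
    have hI := inv_of_run horder hlow hbirthinj hdeathinj hbd _ A hA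
    -- No interval is alive at time `2n`, so the list and with it the stack are empty.
    have hnil : A = [] := by
      apply List.eq_nil_iff_forall_not_mem.2
      intro a ha
      have := hI.alive a ha
      have := hhigh a
      omega
    subst hnil
    obtain ⟨st, U, T, hd, hp⟩ := hI.dec
    cases hd
    refine partition_of_triples T hp.paths ?_
    have := hp.all
    rw [Finset.filter_true_of_mem
      (fun v _ => ((horder v).le.trans (hhigh v)))] at this
    simpa using this
  · rintro ⟨P, hP⟩
    obtain ⟨F, hF⟩ := exists_strategy horder hlow hbirthinj hdeathinj hbd P hP
    obtain ⟨A, hA, _⟩ := run_of_strategy hdeathinj hF (2 * n)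
    simp [hA]
end
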